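/- arXiv:1603.01213 — 10 statements merged into one kernel-verified Lean document; each statement's English description precedes it below -/
import Mathlib

section
/- Let (Ω, μ) be a probability space and W_1, …, W_n random variables taking finitely many values, with H(W_i) ≤ α for every i. Let e, d be positive integers with e + d ≤ n and let β ≥ 0, and assume the exact-repair property with parameters (e, d, β) holds. Then for every set B ⊆ {1, …, n} with |B| = e and every set A ⊆ {1, …, n} \ B with |A| ≤ d, the conditional entropy satisfies H((W_i)_{i∈B} | (W_i)_{i∈A}) ≤ min{ e·α, (d − |A|)·β }. -/
/-!
The bound `e * α` is subadditivity of entropy: `H(W_B | W_A) ≤ H(W_B) ≤ ∑ i ∈ B, H(W_i)`.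

For the bound `(d - |A|) * β`, extend `A` to a set `D` of `d` helpers disjoint from `B`, which is
possible because `e + d ≤ n`, and take the repair messages `S_i`, `i ∈ D`. Since `W_B` is
determined by `S_D`, submodularity gives `H(W_B, W_A, S_D) ≤ H(W_A, S_D)`. The messages of the
nodes of `A` are functions of `W_A`, so
`H(W_A, S_D) ≤ H(W_A, S_{D \ A}) ≤ H(W_A) + ∑ i ∈ D \ A, H(S_i) ≤ H(W_A) + (d - |A|) * β`.

The three entropy facts behind this are monotonicity under functions (`shannonEntropy_comp_le`),
submodularity (`shannonEntropy_submodular`, from `log t ≤ t - 1`), and subadditivity over a finite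
family (`shannonEntropy_pi_le`). Random variables enter these lemmas only through the
measurability of their fibres, so no σ-algebra on the finite codomains is needed.
-/

open MeasureTheory

/-- Shannon entropy of a finitely-valued random variable `X` with respect to `μ`. -/
noncomputable def shannonEntropy {Ω V : Type*} [MeasurableSpace Ω] [Fintype V]
    (μ : Measure Ω) (X : Ω → V) : ℝ :=
  ∑ x : V, Real.negMulLog ((μ (X ⁻¹' {x})).toReal)

/-- Conditional Shannon entropy `H(X|Y) = H(X,Y) - H(Y)`. -/
noncomputable def shannonCondEntropy {Ω V W : Type*} [MeasurableSpace Ω] [Fintype V] [Fintype W]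
    (μ : Measure Ω) (X : Ω → V) (Y : Ω → W) : ℝ :=
  shannonEntropy μ (fun ω => (X ω, Y ω)) - shannonEntropy μ Y

/-- The exact-repair property with parameters `(e, d, β)`: for every set `B` of `e` nodes and
every set `D` of `d` helper nodes disjoint from `B`, there are repair messages `S i = g i ∘ W i`,
each of entropy at most `β`, from which the erased nodes `B` can be recovered exactly
(`H(W_B | S_D) = 0`). -/
def ExactRepairProperty {Ω V : Type*} [MeasurableSpace Ω] [Fintype V]
    (μ : Measure Ω) (n : ℕ) (W : Fin n → Ω → V) (e d : ℕ) (β : ℝ) : Prop :=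
  ∀ B : Finset (Fin n), B.card = e →
    ∀ D : Finset (Fin n), (∀ i ∈ D, i ∉ B) → D.card = d →
      ∃ g : Fin n → V → V,
        (∀ i ∈ D, shannonEntropy μ (fun ω => g i (W i ω)) ≤ β) ∧
        shannonCondEntropy μ (fun ω => fun i : B => W i ω)
          (fun ω => fun i : D => g i (W i ω)) = 0

/-- The law of total probability over the fibres of a finitely-valued `Y`; the event `E` need not
be measurable. -/
lemma sum_measureReal_fibre {Ω T : Type*} [MeasurableSpace Ω] [Fintype T]
    (μ : Measure Ω) [IsProbabilityMeasure μ] {Y : Ω → T}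
    (hY : ∀ y, MeasurableSet (Y ⁻¹' {y})) (E : Set Ω) :
    ∑ y, (μ (Y ⁻¹' {y} ∩ E)).toReal = (μ E).toReal := by
  have h := sum_measure_preimage_singleton (μ := μ.restrict E) Finset.univ (f := Y)
    (fun y _ => hY y)
  simp only [Finset.coe_univ, Set.preimage_univ, Measure.restrict_apply_univ] at h
  rw [← h, ENNReal.toReal_sum (fun y _ => measure_ne_top _ _)]
  exact Finset.sum_congr rfl fun y _ => by rw [Measure.restrict_apply (hY y)]

lemma measurableSet_fibre_prod {Ω S T : Type*} [MeasurableSpace Ω] {X : Ω → S} {Y : Ω → T}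
    (hX : ∀ x, MeasurableSet (X ⁻¹' {x})) (hY : ∀ y, MeasurableSet (Y ⁻¹' {y})) (p : S × T) :
    MeasurableSet ((fun ω => (X ω, Y ω)) ⁻¹' {p}) := by
  have : (fun ω => (X ω, Y ω)) ⁻¹' {p} = X ⁻¹' {p.1} ∩ Y ⁻¹' {p.2} := by
    ext ω; simp [Prod.ext_iff]
  rw [this]
  exact (hX _).inter (hY _)

lemma measurableSet_fibre_pi {Ω ι T : Type*} [MeasurableSpace Ω] [Finite ι] {X : ι → Ω → T}
    (hX : ∀ i x, MeasurableSet (X i ⁻¹' {x})) (v : ι → T) :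
    MeasurableSet ((fun ω i => X i ω) ⁻¹' {v}) := by
  have : (fun ω i => X i ω) ⁻¹' {v} = ⋂ i, X i ⁻¹' {v i} := by
    ext ω; simp [funext_iff]
  rw [this]
  exact MeasurableSet.iInter fun i => hX i _

lemma measurableSet_fibre_comp {Ω S T : Type*} [MeasurableSpace Ω] [Finite S] {X : Ω → S}
    (hX : ∀ x, MeasurableSet (X ⁻¹' {x})) (f : S → T) (y : T) :
    MeasurableSet ((fun ω => f (X ω)) ⁻¹' {y}) := by
  have : (fun ω => f (X ω)) ⁻¹' {y} = ⋃ x ∈ f ⁻¹' {y}, X ⁻¹' {x} := by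
    ext ω; simp
  rw [this]
  exact MeasurableSet.biUnion (Set.to_countable _) fun x _ => hX x

lemma shannonEntropy_comp_le {Ω S T : Type*} [MeasurableSpace Ω] [Fintype S] [Fintype T]
    (μ : Measure Ω) [IsProbabilityMeasure μ] {X : Ω → S}
    (hX : ∀ x, MeasurableSet (X ⁻¹' {x})) (f : S → T) :
    shannonEntropy μ (fun ω => f (X ω)) ≤ shannonEntropy μ X := by
  classical
  unfold shannonEntropy
  rw [← Finset.sum_fiberwise (s := Finset.univ) (g := f)]
  refine Finset.sum_le_sum fun y _ => ?_
  have hsum : (μ ((fun ω => f (X ω)) ⁻¹' {y})).toReal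
      = ∑ x with f x = y, (μ (X ⁻¹' {x})).toReal := by
    rw [← sum_measureReal_fibre μ hX, Finset.sum_filter]
    refine Finset.sum_congr rfl fun x _ => ?_
    split_ifs with h
    · congr 2
      ext ω
      simp only [Set.mem_inter_iff, Set.mem_preimage, Set.mem_singleton_iff]
      grind
    · have : X ⁻¹' {x} ∩ (fun ω => f (X ω)) ⁻¹' {y} = ∅ := by
        ext ω
        simp only [Set.mem_inter_iff, Set.mem_preimage, Set.mem_singleton_iff,
          Set.mem_empty_iff_false]
        grind
      simp [this]
  rw [hsum, Real.negMulLog, neg_mul, Finset.sum_mul, ← Finset.sum_neg_distrib]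
  refine Finset.sum_le_sum fun x hx => ?_
  rw [Real.negMulLog, neg_mul, neg_le_neg_iff]
  rcases (ENNReal.toReal_nonneg (a := μ (X ⁻¹' {x}))).eq_or_lt with h | h
  · simp [← h]
  · refine mul_le_mul_of_nonneg_left (Real.log_le_log h ?_) h.le
    exact Finset.single_le_sum (f := fun x => (μ (X ⁻¹' {x})).toReal)
      (fun _ _ => ENNReal.toReal_nonneg) hx

/-- The term-by-term form of submodularity: `p`, `a`, `b`, `c` are the probabilities of
`(x, y, z)`, `(x, z)`, `(y, z)` and `z`. -/
lemma mul_log_le_div_sub {p a b c : ℝ} (hp : 0 ≤ p) (hpa : p ≤ a) (hpb : p ≤ b) (hac : a ≤ c) :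
    p * Real.log a + p * Real.log b - p * Real.log p - p * Real.log c ≤ a * b / c - p := by
  rcases hp.eq_or_lt with rfl | hp
  · simp only [zero_mul, sub_zero, add_zero]
    have := hpa.trans hac
    positivity
  · have ha := hp.trans_le hpa
    have hb := hp.trans_le hpb
    have hc := ha.trans_le hac
    have h := Real.log_le_sub_one_of_pos (x := a * b / (p * c)) (by positivity)
    rw [Real.log_div (by positivity) (by positivity), Real.log_mul ha.ne' hb.ne',
      Real.log_mul hp.ne' hc.ne'] at h
    have h2 := mul_le_mul_of_nonneg_left h hp.le
    have h3 : p * (a * b / (p * c) - 1) = a * b / c - p := by field_simp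
    linarith

/-- Submodularity of entropy: `X` and `Y` have nonnegative mutual information given `Z`. -/
lemma shannonEntropy_submodular {Ω S T R : Type*} [MeasurableSpace Ω] [Fintype S] [Fintype T]
    [Fintype R] (μ : Measure Ω) [IsProbabilityMeasure μ] {X : Ω → S} {Y : Ω → T} {Z : Ω → R}
    (hX : ∀ x, MeasurableSet (X ⁻¹' {x})) (hY : ∀ y, MeasurableSet (Y ⁻¹' {y})) :
    shannonEntropy μ (fun ω => (X ω, Y ω, Z ω)) + shannonEntropy μ Z
      ≤ shannonEntropy μ (fun ω => (X ω, Z ω)) + shannonEntropy μ (fun ω => (Y ω, Z ω)) := by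
  obtain ⟨p, hp⟩ : ∃ p : S → T → R → ℝ,
      ∀ x y z, p x y z = (μ ((fun ω => (X ω, Y ω, Z ω)) ⁻¹' {(x, y, z)})).toReal :=
    ⟨_, fun _ _ _ => rfl⟩
  obtain ⟨a, ha⟩ : ∃ a : S → R → ℝ,
      ∀ x z, a x z = (μ ((fun ω => (X ω, Z ω)) ⁻¹' {(x, z)})).toReal := ⟨_, fun _ _ => rfl⟩
  obtain ⟨b, hb⟩ : ∃ b : T → R → ℝ,
      ∀ y z, b y z = (μ ((fun ω => (Y ω, Z ω)) ⁻¹' {(y, z)})).toReal := ⟨_, fun _ _ => rfl⟩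
  obtain ⟨c, hc⟩ : ∃ c : R → ℝ, ∀ z, c z = (μ (Z ⁻¹' {z})).toReal := ⟨_, fun _ => rfl⟩
  have hp0 : ∀ x y z, 0 ≤ p x y z := fun x y z => by rw [hp]; exact ENNReal.toReal_nonneg
  have hpa : ∀ x z, ∑ y, p x y z = a x z := fun x z => by
    rw [ha, ← sum_measureReal_fibre μ hY]
    refine Finset.sum_congr rfl fun y _ => ?_
    rw [hp]
    congr 2
    ext ω
    simp only [Set.mem_inter_iff, Set.mem_preimage, Set.mem_singleton_iff, Prod.mk.injEq]
    tauto
  have hpb : ∀ y z, ∑ x, p x y z = b y z := fun y z => by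
    rw [hb, ← sum_measureReal_fibre μ hX]
    refine Finset.sum_congr rfl fun x _ => ?_
    rw [hp]
    congr 2
    ext ω
    simp only [Set.mem_inter_iff, Set.mem_preimage, Set.mem_singleton_iff, Prod.mk.injEq]
  have hac : ∀ z, ∑ x, a x z = c z := fun z => by
    rw [hc, ← sum_measureReal_fibre μ hX]
    refine Finset.sum_congr rfl fun x _ => ?_
    rw [ha]
    congr 2
    ext ω
    simp only [Set.mem_inter_iff, Set.mem_preimage, Set.mem_singleton_iff, Prod.mk.injEq]
  have hbc : ∀ z, ∑ y, b y z = c z := fun z => by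
    rw [← hac]
    simp only [← hpa, ← hpb]
    exact Finset.sum_comm
  have ha0 : ∀ x z, 0 ≤ a x z := fun x z => by rw [ha]; exact ENNReal.toReal_nonneg
  have key : ∀ z, ∑ x, ∑ y, (p x y z * Real.log (a x z) + p x y z * Real.log (b y z)
      - p x y z * Real.log (p x y z) - p x y z * Real.log (c z)) ≤ 0 := fun z => by
    calc _ ≤ ∑ x, ∑ y, (a x z * b y z / c z - p x y z) := by
          refine Finset.sum_le_sum fun x _ => Finset.sum_le_sum fun y _ => ?_
          refine mul_log_le_div_sub (hp0 x y z) ?_ ?_ ?_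
          · rw [← hpa]
            exact Finset.single_le_sum (f := fun y => p x y z) (fun y _ => hp0 x y z)
              (Finset.mem_univ y)
          · rw [← hpb]
            exact Finset.single_le_sum (f := fun x => p x y z) (fun x _ => hp0 x y z)
              (Finset.mem_univ x)
          · rw [← hac]
            exact Finset.single_le_sum (f := fun x => a x z) (fun x _ => ha0 x z)
              (Finset.mem_univ x)
      _ = c z * c z / c z - c z := by
          simp only [Finset.sum_sub_distrib, hpa, hac, ← Finset.sum_div, ← Finset.mul_sum, hbc,
            ← Finset.sum_mul]
      _ = 0 := by simp
  have e1 : shannonEntropy μ (fun ω => (X ω, Y ω, Z ω))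
      = -∑ z, ∑ x, ∑ y, p x y z * Real.log (p x y z) := by
    simp only [shannonEntropy, Fintype.sum_prod_type, ← hp, Real.negMulLog, neg_mul,
      Finset.sum_neg_distrib]
    rw [Finset.sum_comm (s := (Finset.univ : Finset R))]
    refine congrArg _ (Finset.sum_congr rfl fun x _ => Finset.sum_comm)
  have e2 : shannonEntropy μ (fun ω => (X ω, Z ω))
      = -∑ z, ∑ x, ∑ y, p x y z * Real.log (a x z) := by
    simp only [shannonEntropy, Fintype.sum_prod_type, ← ha, Real.negMulLog, neg_mul,
      Finset.sum_neg_distrib, ← Finset.sum_mul, hpa]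
    rw [Finset.sum_comm]
  have e3 : shannonEntropy μ (fun ω => (Y ω, Z ω))
      = -∑ z, ∑ x, ∑ y, p x y z * Real.log (b y z) := by
    simp only [shannonEntropy, Fintype.sum_prod_type, ← hb, Real.negMulLog, neg_mul,
      Finset.sum_neg_distrib]
    rw [Finset.sum_comm]
    refine congrArg _ (Finset.sum_congr rfl fun z _ => ?_)
    rw [Finset.sum_comm]
    simp only [← Finset.sum_mul, hpb]
  have e4 : shannonEntropy μ Z = -∑ z, ∑ x, ∑ y, p x y z * Real.log (c z) := by
    simp only [shannonEntropy, ← hc, Real.negMulLog, neg_mul,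
      Finset.sum_neg_distrib, ← Finset.sum_mul, hpa, hac]
  have hsum := Finset.sum_nonpos fun z (_ : z ∈ Finset.univ) => key z
  simp only [Finset.sum_sub_distrib, Finset.sum_add_distrib] at hsum
  rw [e1, e2, e3, e4]
  linarith

lemma shannonEntropy_of_subsingleton {Ω T : Type*} [MeasurableSpace Ω] [Fintype T]
    [Subsingleton T] (μ : Measure Ω) [IsProbabilityMeasure μ] (X : Ω → T) :
    shannonEntropy μ X = 0 := by
  refine Finset.sum_eq_zero fun x _ => ?_
  have : X ⁻¹' {x} = Set.univ := by
    ext ω; simpa using Subsingleton.elim _ _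
  simp [this]

lemma shannonEntropy_prod_le {Ω S T : Type*} [MeasurableSpace Ω] [Fintype S] [Fintype T]
    (μ : Measure Ω) [IsProbabilityMeasure μ] {X : Ω → S} {Y : Ω → T}
    (hX : ∀ x, MeasurableSet (X ⁻¹' {x})) (hY : ∀ y, MeasurableSet (Y ⁻¹' {y})) :
    shannonEntropy μ (fun ω => (X ω, Y ω)) ≤ shannonEntropy μ X + shannonEntropy μ Y := by
  -- Subadditivity is submodularity conditioned on a constant.
  have hU : ∀ u : Unit, MeasurableSet ((fun _ : Ω => ()) ⁻¹' {u}) := fun u => by simp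
  have h := shannonEntropy_submodular μ (Z := fun _ => ()) hX hY
  have h1 := shannonEntropy_comp_le μ
    (measurableSet_fibre_prod hX (measurableSet_fibre_prod hY hU)) (fun q => (q.1, q.2.1))
  have h2 := shannonEntropy_comp_le μ hX (fun x => (x, ()))
  have h3 := shannonEntropy_comp_le μ hY (fun x => (x, ()))
  rw [shannonEntropy_of_subsingleton μ (fun _ : Ω => ())] at h
  simp only at h1
  linarith

lemma shannonEntropy_pi_le {Ω ι T : Type*} [MeasurableSpace Ω] [DecidableEq ι] [Fintype T]
    (μ : Measure Ω) [IsProbabilityMeasure μ] {X : ι → Ω → T}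
    (hX : ∀ i x, MeasurableSet (X i ⁻¹' {x})) (s : Finset ι) :
    shannonEntropy μ (fun ω => fun i : s => X i ω) ≤ ∑ i ∈ s, shannonEntropy μ (X i) := by
  induction s using Finset.induction_on with
  | empty => rw [shannonEntropy_of_subsingleton]; simp
  | insert a s has ih =>
    rw [Finset.sum_insert has]
    have hs := measurableSet_fibre_pi fun i : s => hX i
    have h1 := shannonEntropy_prod_le μ (hX a) hs
    have h2 := shannonEntropy_comp_le μ (measurableSet_fibre_prod (hX a) hs)
      (fun q => fun i : (insert a s : Finset ι) => if h : i.1 ∈ s then q.2 ⟨i, h⟩ else q.1)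
    have h3 : (fun ω => fun i : (insert a s : Finset ι) => if i.1 ∈ s then X i ω else X a ω)
        = fun ω => fun i : (insert a s : Finset ι) => X i ω := by
      funext ω i
      split_ifs with h
      · rfl
      · rw [(Finset.mem_insert.1 i.2).resolve_right h]
    simp only [dite_eq_ite, h3] at h2
    linarith

/-- For an exact-repair code with parameters `(e, d, β)` and node entropies at most `α`,
for every erased set `B` of size `e` and every set `A` of surviving nodes with `|A| ≤ d`,
`H(W_B | W_A) ≤ min{e·α, (d − |A|)·β}`. -/
theorem condEntropy_le_min_of_exactRepair
    {Ω V : Type*} [MeasurableSpace Ω] [Fintype V] [MeasurableSpace V]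
    [MeasurableSingletonClass V]
    (μ : Measure Ω) [IsProbabilityMeasure μ]
    (n : ℕ) (W : Fin n → Ω → V) (hWmeas : ∀ i, Measurable (W i))
    (α : ℝ) (hα : ∀ i, shannonEntropy μ (W i) ≤ α)
    (e d : ℕ) (he : 0 < e) (hd : 0 < d) (hed : e + d ≤ n)
    (β : ℝ) (hβ : 0 ≤ β)
    (hrep : ExactRepairProperty μ n W e d β)
    (B A : Finset (Fin n)) (hB : B.card = e) (hAB : ∀ i ∈ A, i ∉ B) (hAd : A.card ≤ d) :
    shannonCondEntropy μ (fun ω => fun i : B => W i ω) (fun ω => fun i : A => W i ω)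
      ≤ min ((e : ℝ) * α) (((d : ℝ) - A.card) * β) := by
  have hW : ∀ i x, MeasurableSet (W i ⁻¹' {x}) := fun i x =>
    hWmeas i (measurableSet_singleton x)
  have hWB := measurableSet_fibre_pi fun i : B => hW i
  have hWA := measurableSet_fibre_pi fun i : A => hW i
  refine le_min ?_ ?_
  · have h1 := shannonEntropy_prod_le μ hWB hWA
    have h2 := shannonEntropy_pi_le μ hW B
    have h3 : ∑ i ∈ B, shannonEntropy μ (W i) ≤ e * α := by
      have := Finset.sum_le_card_nsmul B _ α fun i _ => hα i
      rwa [hB, nsmul_eq_mul] at this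
    unfold shannonCondEntropy
    linarith
  · obtain ⟨D, hAD, hDB, hD⟩ : ∃ D, A ⊆ D ∧ D ⊆ Bᶜ ∧ D.card = d := by
      refine Finset.exists_subsuperset_card_eq (fun i hi => ?_) hAd ?_
      · exact Finset.mem_compl.2 (hAB i hi)
      · rw [Finset.card_compl, Fintype.card_fin, hB]; omega
    obtain ⟨g, hg, hrec⟩ := hrep B hB D (fun i hi => Finset.mem_compl.1 (hDB hi)) hD
    have hS : ∀ i x, MeasurableSet ((fun ω => g i (W i ω)) ⁻¹' {x}) := fun i =>
      measurableSet_fibre_comp (hW i) (g i)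
    have hSD := measurableSet_fibre_pi fun i : D => hS i
    have hST := measurableSet_fibre_pi fun i : (D \ A : Finset (Fin n)) => hS i
    have hsub := shannonEntropy_submodular μ
      (Z := fun ω => fun i : D => g i (W i ω)) hWB hWA
    have hmono := shannonEntropy_comp_le μ
      (measurableSet_fibre_prod hWB (measurableSet_fibre_prod hWA hSD)) (fun q => (q.1, q.2.1))
    -- The messages of the nodes of `A` are recomputed from `W_A`.
    have hfun := shannonEntropy_comp_le μ (measurableSet_fibre_prod hWA hST)
      (fun q => (q.1, fun i : D => if h : i.1 ∈ A then g i (q.1 ⟨i, h⟩)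
        else q.2 ⟨i, Finset.mem_sdiff.2 ⟨i.2, h⟩⟩))
    simp only [dite_eq_ite, ite_self] at hfun
    have hprod := shannonEntropy_prod_le μ hWA hST
    have hpi := shannonEntropy_pi_le μ hS (D \ A)
    have hle : ∑ i ∈ D \ A, shannonEntropy μ (fun ω => g i (W i ω))
        ≤ ((d : ℝ) - A.card) * β := by
      have := Finset.sum_le_card_nsmul (D \ A) _ β fun i hi => hg i (Finset.mem_sdiff.1 hi).1
      rwa [nsmul_eq_mul, Finset.card_sdiff_of_subset hAD, hD, Nat.cast_sub hAd] at this
    unfold shannonCondEntropy at hrec ⊢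
    simp only at hmono
    linarith
end

section
/- Let (Ω, μ) be a probability space and W_1, …, W_n random variables taking finitely many values. Let e, d, k be positive integers with e ≤ k ≤ n, e + d ≤ n, and d > k − e, let β ≥ 0, and assume the exact-repair property with parameters (e, d, β) holds. Let M = H(W_1, …, W_k) and assume the code is MDS in the sense that H(W_i) ≤ M/k for every i. Then β ≥ e·M / (k·(d − k + e)). (In particular, for an MDS code with r = n − k parities and d = n − e, the normalized repair bandwidth β·k/M is at least e/r.) -/
/-!
The argument is the cut-set bound. Choose `B` among the first `k` nodes with `e` elements, let `A`
be the remaining `k - e` of them, and extend `A` to a helper set `D` of size `d` disjoint from `B`.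
Let `Z` consist of the full contents `W_i` for `i ∈ A` and of the repair messages `S_i` for
`i ∈ D \ A`. The messages of all of `D` are functions of `Z`, hence so is `W_B` almost surely, and
therefore so is `(W_1, …, W_k)`. Thus
`M ≤ H(Z) ≤ ∑_{i ∈ A} H(W_i) + ∑_{i ∈ D \ A} H(S_i) ≤ (k - e) M / k + (d - k + e) β`,
which rearranges to the claim.

The information-theoretic inputs are: a function of `Z` has at most the entropy of `Z`
(`shannonEntropy_comp_le`); if the entropies agree then `Z` can be recovered almost surely
(`exists_recover_of_entropy_eq`), which turns `H(X|Y) = 0` into functional dependence; and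
subadditivity (`shannonEntropy_pair_le`, `shannonEntropy_family_le`).
-/

open MeasureTheory

/-! ### Superadditivity of `-x log x` -/

lemma negMulLog_sum_le {ι : Type*} (s : Finset ι) (p : ι → ℝ) (hp : ∀ i ∈ s, 0 ≤ p i) :
    Real.negMulLog (∑ i ∈ s, p i) ≤ ∑ i ∈ s, Real.negMulLog (p i) := by
  simp only [Real.negMulLog, neg_mul, Finset.sum_neg_distrib, Finset.sum_mul]
  rw [neg_le_neg_iff]
  refine Finset.sum_le_sum fun i hi => ?_
  rcases (hp i hi).eq_or_lt with h | h
  · simp [← h]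
  · exact mul_le_mul_of_nonneg_left
      (Real.log_le_log h (Finset.single_le_sum hp hi)) h.le

/-- Two positive masses make the superadditivity of `-x log x` strict. -/
lemma negMulLog_sum_lt {ι : Type*} (s : Finset ι) (p : ι → ℝ) (hp : ∀ i ∈ s, 0 ≤ p i)
    {a b : ι} (ha : a ∈ s) (hb : b ∈ s) (hab : a ≠ b) (hpa : 0 < p a) (hpb : 0 < p b) :
    Real.negMulLog (∑ i ∈ s, p i) < ∑ i ∈ s, Real.negMulLog (p i) := by
  simp only [Real.negMulLog, neg_mul, Finset.sum_neg_distrib, Finset.sum_mul]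
  rw [neg_lt_neg_iff]
  refine Finset.sum_lt_sum (fun i hi => ?_) ⟨a, ha, ?_⟩
  · rcases (hp i hi).eq_or_lt with h | h
    · simp [← h]
    · exact mul_le_mul_of_nonneg_left
        (Real.log_le_log h (Finset.single_le_sum hp hi)) h.le
  · refine mul_lt_mul_of_pos_left (Real.log_lt_log hpa ?_) hpa
    exact Finset.single_lt_sum hab.symm ha hb hpb fun i hi _ => hp i hi

/-! ### Shannon entropy of finitely-valued variables -/

lemma shannonEntropy_congr_ae {Ω V : Type*} [MeasurableSpace Ω] [Fintype V] (μ : Measure Ω)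
    {X Y : Ω → V} (h : ∀ᵐ ω ∂μ, X ω = Y ω) :
    shannonEntropy μ X = shannonEntropy μ Y := by
  unfold shannonEntropy
  refine Finset.sum_congr rfl fun x _ => ?_
  congr 2
  refine measure_congr ?_
  filter_upwards [h] with ω hω
  exact congrArg (· = x) hω

section Entropy

variable {Ω U V : Type*} [MeasurableSpace Ω] [Fintype U] [Fintype V]
  [MeasurableSpace U] [MeasurableSingletonClass U]
  [MeasurableSpace V] [MeasurableSingletonClass V]
  (μ : Measure Ω) [IsProbabilityMeasure μ]

open Classical in
/-- The law of `f ∘ Z` is obtained by summing the law of `Z` over the fibres of `f`. -/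
lemma toReal_measure_comp_preimage {T : Type*} {Z : Ω → V} (hZ : Measurable Z) (f : V → T)
    (t : T) :
    (μ ((fun ω => f (Z ω)) ⁻¹' {t})).toReal
      = ∑ z with f z = t, (μ (Z ⁻¹' {z})).toReal := by
  have h := sum_measureReal_preimage_singleton (μ := μ) (Finset.univ.filter fun z => f z = t)
    (f := Z) (fun z _ => hZ (measurableSet_singleton z))
  simp only [measureReal_def] at h
  rw [h]
  congr 2
  ext ω
  simp

open Classical in
lemma shannonEntropy_comp_le_s3 {T : Type*} [Fintype T] {Z : Ω → V} (hZ : Measurable Z)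
    (f : V → T) :
    shannonEntropy μ (fun ω => f (Z ω)) ≤ shannonEntropy μ Z := by
  unfold shannonEntropy
  rw [← Finset.sum_fiberwise Finset.univ f fun z => Real.negMulLog (μ (Z ⁻¹' {z})).toReal]
  refine Finset.sum_le_sum fun t _ => ?_
  rw [toReal_measure_comp_preimage μ hZ]
  exact negMulLog_sum_le _ _ fun _ _ => ENNReal.toReal_nonneg

open Classical in
/-- If applying `f` to `Z` loses no entropy, then `f` is injective on the values that `Z` takes with
positive probability. -/
lemma eq_of_entropy_eq {T : Type*} [Fintype T] {Z : Ω → V} (hZ : Measurable Z) (f : V → T)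
    (h : shannonEntropy μ (fun ω => f (Z ω)) = shannonEntropy μ Z) {a b : V}
    (ha : μ (Z ⁻¹' {a}) ≠ 0) (hb : μ (Z ⁻¹' {b}) ≠ 0) (hab : f a = f b) : a = b := by
  by_contra hne
  refine h.not_lt ?_
  unfold shannonEntropy
  rw [← Finset.sum_fiberwise Finset.univ f fun z => Real.negMulLog (μ (Z ⁻¹' {z})).toReal]
  refine Finset.sum_lt_sum (fun t _ => ?_) ⟨f a, Finset.mem_univ _, ?_⟩
  · rw [toReal_measure_comp_preimage μ hZ]
    exact negMulLog_sum_le _ _ fun _ _ => ENNReal.toReal_nonneg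
  · rw [toReal_measure_comp_preimage μ hZ]
    exact negMulLog_sum_lt _ _ (fun _ _ => ENNReal.toReal_nonneg) (a := a) (b := b)
      (by simp) (by simp [hab]) hne
      (ENNReal.toReal_pos ha (measure_ne_top _ _)) (ENNReal.toReal_pos hb (measure_ne_top _ _))

lemma exists_recover_of_entropy_eq {T : Type*} [Fintype T] {Z : Ω → V} (hZ : Measurable Z)
    (f : V → T) (h : shannonEntropy μ (fun ω => f (Z ω)) = shannonEntropy μ Z) :
    ∃ r : T → V, ∀ᵐ ω ∂μ, Z ω = r (f (Z ω)) := by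
  classical
  obtain ⟨ω₀⟩ : Nonempty Ω := nonempty_of_isProbabilityMeasure μ
  have : Nonempty V := ⟨Z ω₀⟩
  have hpos : ∀ᵐ ω ∂μ, ∀ z, Z ω = z → μ (Z ⁻¹' {z}) ≠ 0 := by
    rw [ae_all_iff]
    intro z
    by_cases hz : μ (Z ⁻¹' {z}) = 0
    · filter_upwards [measure_eq_zero_iff_ae_notMem.1 hz] with ω hω hzω
      exact absurd hzω hω
    · exact Filter.Eventually.of_forall fun _ _ => hz
  refine ⟨fun t => Function.invFunOn f {z | μ (Z ⁻¹' {z}) ≠ 0} t, ?_⟩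
  filter_upwards [hpos] with ω hω
  have hex : ∃ z ∈ {z | μ (Z ⁻¹' {z}) ≠ 0}, f z = f (Z ω) := ⟨Z ω, hω _ rfl, rfl⟩
  exact eq_of_entropy_eq μ hZ f h (hω _ rfl) (Function.invFunOn_mem hex)
    (Function.invFunOn_eq hex).symm

lemma exists_of_shannonCondEntropy_eq_zero {X : Ω → U} {Y : Ω → V} (hX : Measurable X)
    (hY : Measurable Y) (h : shannonCondEntropy μ X Y = 0) :
    ∃ r : V → U, ∀ᵐ ω ∂μ, X ω = r (Y ω) := by
  obtain ⟨r, hr⟩ := exists_recover_of_entropy_eq μ (hX.prodMk hY) Prod.snd (sub_eq_zero.1 h).symm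
  refine ⟨fun y => (r y).1, ?_⟩
  filter_upwards [hr] with ω hω
  exact congrArg Prod.fst hω

/-- Subadditivity of entropy: with `p` the joint law and `q₁`, `q₂` the marginals, sum the bound
`p log (q₁ q₂ / p) ≤ q₁ q₂ - p` over all pairs of values. -/
lemma shannonEntropy_pair_le {X : Ω → U} {Y : Ω → V} (hX : Measurable X) (hY : Measurable Y) :
    shannonEntropy μ (fun ω => (X ω, Y ω)) ≤ shannonEntropy μ X + shannonEntropy μ Y := by
  classical
  set p : U → V → ℝ := fun x y => (μ ((fun ω => (X ω, Y ω)) ⁻¹' {(x, y)})).toReal with hp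
  set q₁ : U → ℝ := fun x => (μ (X ⁻¹' {x})).toReal with hq₁
  set q₂ : V → ℝ := fun y => (μ (Y ⁻¹' {y})).toReal with hq₂
  have hp0 : ∀ x y, 0 ≤ p x y := fun _ _ => ENNReal.toReal_nonneg
  have h1 : ∀ x, q₁ x = ∑ y, p x y := by
    intro x
    have := toReal_measure_comp_preimage μ (hX.prodMk hY) Prod.fst x
    rw [Finset.sum_filter, Fintype.sum_prod_type, Finset.sum_eq_single x] at this
    · simpa using this
    · intro b _ hb
      simp [hb]
    · simp
  have h2 : ∀ y, q₂ y = ∑ x, p x y := by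
    intro y
    have := toReal_measure_comp_preimage μ (hX.prodMk hY) Prod.snd y
    rw [Finset.sum_filter, Fintype.sum_prod_type_right, Finset.sum_eq_single y] at this
    · simpa using this
    · intro b _ hb
      simp [hb]
    · simp
  have t1 : ∑ x, q₁ x = 1 := by
    have h := sum_measureReal_preimage_singleton (μ := μ) Finset.univ
      (f := X) (fun z _ => hX (measurableSet_singleton z))
    simpa [measureReal_def] using h
  have t2 : ∑ y, q₂ y = 1 := by
    have h := sum_measureReal_preimage_singleton (μ := μ) Finset.univ
      (f := Y) (fun z _ => hY (measurableSet_singleton z))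
    simpa [measureReal_def] using h
  have eX : shannonEntropy μ X = ∑ x, ∑ y, -(p x y * Real.log (q₁ x)) := by
    change ∑ x, Real.negMulLog (q₁ x) = _
    refine Finset.sum_congr rfl fun x _ => ?_
    rw [Finset.sum_neg_distrib, ← Finset.sum_mul, ← h1, Real.negMulLog, neg_mul]
  have eY : shannonEntropy μ Y = ∑ x, ∑ y, -(p x y * Real.log (q₂ y)) := by
    change ∑ y, Real.negMulLog (q₂ y) = _
    rw [Finset.sum_comm]
    refine Finset.sum_congr rfl fun y _ => ?_
    rw [Finset.sum_neg_distrib, ← Finset.sum_mul, ← h2, Real.negMulLog, neg_mul]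
  have eXY : shannonEntropy μ (fun ω => (X ω, Y ω)) = ∑ x, ∑ y, Real.negMulLog (p x y) := by
    unfold shannonEntropy
    rw [Fintype.sum_prod_type]
  have ez : ∑ x, ∑ y, (q₁ x * q₂ y - p x y) = 0 := by
    simp only [Finset.sum_sub_distrib, ← Finset.mul_sum, t2, mul_one, ← h1, sub_self,
      Finset.sum_const_zero]
  have key : ∀ x y, Real.negMulLog (p x y) ≤
      -(p x y * Real.log (q₁ x)) + -(p x y * Real.log (q₂ y)) + (q₁ x * q₂ y - p x y) := by
    intro x y
    have l1 : p x y ≤ q₁ x := by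
      rw [h1]
      exact Finset.single_le_sum (f := fun y => p x y) (fun y _ => hp0 x y) (Finset.mem_univ y)
    have l2 : p x y ≤ q₂ y := by
      rw [h2]
      exact Finset.single_le_sum (f := fun x => p x y) (fun x _ => hp0 x y) (Finset.mem_univ x)
    rcases (hp0 x y).eq_or_lt with h | h
    · rw [← h] at l1 l2 ⊢
      simpa using mul_nonneg l1 l2
    · have p1 := h.trans_le l1
      have p2 := h.trans_le l2
      have hl := Real.log_le_sub_one_of_pos (div_pos (mul_pos p1 p2) h)
      rw [Real.log_div (mul_pos p1 p2).ne' h.ne', Real.log_mul p1.ne' p2.ne'] at hl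
      have hm := mul_le_mul_of_nonneg_left hl h.le
      have hc : p x y * (q₁ x * q₂ y / p x y - 1) = q₁ x * q₂ y - p x y := by
        field_simp
      rw [hc] at hm
      rw [Real.negMulLog]
      linarith
  calc shannonEntropy μ (fun ω => (X ω, Y ω))
      = ∑ x, ∑ y, Real.negMulLog (p x y) := eXY
    _ ≤ ∑ x, ∑ y, (-(p x y * Real.log (q₁ x)) + -(p x y * Real.log (q₂ y))
          + (q₁ x * q₂ y - p x y)) :=
        Finset.sum_le_sum fun x _ => Finset.sum_le_sum fun y _ => key x y
    _ = shannonEntropy μ X + shannonEntropy μ Y := by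
        simp only [Finset.sum_add_distrib] at ez ⊢
        rw [ez, eX, eY, add_zero]

lemma shannonEntropy_family_le {ι : Type*} [DecidableEq ι] (X : ι → Ω → V) (hX : ∀ i, Measurable (X i))
    (s : Finset ι) :
    shannonEntropy μ (fun ω => fun i : s => X i ω) ≤ ∑ i ∈ s, shannonEntropy μ (X i) := by
  induction s using Finset.induction_on with
  | empty => simp [shannonEntropy, Set.preimage, eq_iff_true_of_subsingleton]
  | insert a s ha ih =>
    rw [Finset.sum_insert ha]
    have hs : Measurable (fun ω => fun i : s => X i ω) := measurable_pi_lambda _ fun i => hX i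
    -- The family over `insert a s` is a function of the pair `(X a, (X i)_{i ∈ s})`.
    let f : V × (s → V) → (↥(insert a s) → V) := fun z i =>
      if h : (i : ι) ∈ s then z.2 ⟨i, h⟩ else z.1
    have hf : (fun ω => fun i : ↥(insert a s) => X i ω)
        = fun ω => f (X a ω, fun i : s => X i ω) := by
      funext ω i
      by_cases h : (i : ι) ∈ s
      · simp [f, h]
      · have : (i : ι) = a := (Finset.mem_insert.1 i.2).resolve_right h
        simp [f, ha, this]
    rw [hf]
    calc _ ≤ _ := shannonEntropy_comp_le_s3 μ ((hX a).prodMk hs) f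
      _ ≤ _ := shannonEntropy_pair_le μ (hX a) hs
      _ ≤ _ := by gcongr

end Entropy

/-! ### The cut-set bound -/

/-- The cut `A`, `B`, `D`: the first `k` nodes split as `A ∪ B`, and `D ⊇ A` avoids `B`. -/
lemma exists_cut {n e d k : ℕ} (hek : e ≤ k) (hkn : k ≤ n) (hed : e + d ≤ n) (hdk : k - e < d) :
    ∃ A B D : Finset (Fin n), B.card = e ∧ A.card = k - e ∧ D.card = d ∧ A ⊆ D ∧
      (∀ i ∈ D, i ∉ B) ∧ ∀ i : Fin k, Fin.castLE hkn i ∈ A ∨ Fin.castLE hkn i ∈ B := by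
  classical
  let K : Finset (Fin n) := Finset.univ.map (Fin.castLEEmb hkn)
  have hK : K.card = k := by simp [K]
  obtain ⟨B, hBK, hB⟩ := Finset.exists_subset_card_eq (hek.trans_eq hK.symm)
  have hA : (K \ B).card = k - e := by rw [Finset.card_sdiff_of_subset hBK, hK, hB]
  have hAB : K \ B ⊆ Bᶜ := fun i hi => by simpa using (Finset.mem_sdiff.1 hi).2
  obtain ⟨D, hAD, hDB, hD⟩ := Finset.exists_subsuperset_card_eq hAB (n := d) (by omega)
    (by rw [Finset.card_compl, Fintype.card_fin, hB]; omega)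
  refine ⟨K \ B, B, D, hB, hA, hD, hAD, fun i hi => by simpa using hDB hi, fun i => ?_⟩
  have : Fin.castLE hkn i ∈ K := Finset.mem_map.2 ⟨i, Finset.mem_univ _, rfl⟩
  by_cases h : Fin.castLE hkn i ∈ B
  · exact Or.inr h
  · exact Or.inl (Finset.mem_sdiff.2 ⟨this, h⟩)

/-- For an MDS exact-repair code (`H(W_i) ≤ M/k`), the repair bandwidth satisfies
`β ≥ e·M / (k·(d − k + e))`. -/
theorem repairBandwidth_lower_bound_of_exactRepair_MDS
    {Ω V : Type*} [MeasurableSpace Ω] [Fintype V] [MeasurableSpace V]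
    [MeasurableSingletonClass V]
    (μ : Measure Ω) [IsProbabilityMeasure μ]
    (n : ℕ) (W : Fin n → Ω → V) (hWmeas : ∀ i, Measurable (W i))
    (e d k : ℕ) (he : 0 < e) (hd : 0 < d) (hk : 0 < k)
    (hek : e ≤ k) (hkn : k ≤ n) (hed : e + d ≤ n) (hdk : k - e < d)
    (β : ℝ) (hβ : 0 ≤ β)
    (hrep : ExactRepairProperty μ n W e d β)
    (M : ℝ)
    (hM : M = shannonEntropy μ (fun ω => fun i : Fin k => W (Fin.castLE hkn i) ω))
    (hMDS : ∀ i, shannonEntropy μ (W i) ≤ M / k) :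
    (e : ℝ) * M / ((k : ℝ) * ((d : ℝ) - (k : ℝ) + (e : ℝ))) ≤ β := by
  classical
  obtain ⟨A, B, D, hB, hA, hD, hAD, hDB, hcov⟩ := exists_cut hek hkn hed hdk
  obtain ⟨g, hg, hcond⟩ := hrep B hB D hDB hD
  have hgm : ∀ i, Measurable (fun ω => g i (W i ω)) := fun i =>
    (measurable_of_finite (g i)).comp (hWmeas i)
  obtain ⟨r, hr⟩ := exists_of_shannonCondEntropy_eq_zero μ
    (measurable_pi_lambda _ fun i : B => hWmeas i)
    (measurable_pi_lambda _ fun i : D => hgm i) hcond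
  -- Nodes in `A` reveal their whole content, the other helpers only their repair message.
  let X : Fin n → Ω → V := fun i ω => if i ∈ A then W i ω else g i (W i ω)
  have hXA : ∀ i ∈ A, X i = W i := fun i hi => by funext ω; simp [X, hi]
  have hXnA : ∀ i, i ∉ A → X i = fun ω => g i (W i ω) := fun i hi => by funext ω; simp [X, hi]
  have hX : ∀ i, Measurable (X i) := by
    intro i
    by_cases hi : i ∈ A
    · rw [hXA i hi]; exact hWmeas i
    · rw [hXnA i hi]; exact hgm i
  -- `S` computes all repair messages from the revealed data, `F` the first `k` nodes.
  let S : (D → V) → (D → V) := fun z i => if (i : Fin n) ∈ A then g i (z i) else z i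
  let F : (D → V) → (Fin k → V) := fun z i =>
    if h : Fin.castLE hkn i ∈ A then z ⟨_, hAD h⟩
    else r (S z) ⟨_, (hcov i).resolve_left h⟩
  have hF : ∀ᵐ ω ∂μ, (fun i : Fin k => W (Fin.castLE hkn i) ω) = F (fun i : D => X i ω) := by
    filter_upwards [hr] with ω hω
    have hS : S (fun i : D => X i ω) = fun i : D => g i (W i ω) := by
      funext i
      by_cases hi : (i : Fin n) ∈ A <;> simp [S, X, hi]
    funext i
    by_cases h : Fin.castLE hkn i ∈ A
    · simp [F, X, h]
    · simp only [F, h, dite_false, hS]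
      exact congrFun hω ⟨_, (hcov i).resolve_left h⟩
  have hle : M ≤ ∑ i ∈ D, shannonEntropy μ (X i) := by
    rw [hM, shannonEntropy_congr_ae μ hF]
    exact (shannonEntropy_comp_le_s3 μ (measurable_pi_lambda _ fun i : D => hX i) F).trans
      (shannonEntropy_family_le μ X hX D)
  have hsA : ∑ i ∈ A, shannonEntropy μ (X i) ≤ ((k : ℝ) - e) * (M / k) := by
    have h := Finset.sum_le_card_nsmul A (fun i => shannonEntropy μ (X i)) (M / k)
      fun i hi => by rw [hXA i hi]; exact hMDS i
    rwa [hA, nsmul_eq_mul, Nat.cast_sub hek] at h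
  have hsD : ∑ i ∈ D \ A, shannonEntropy μ (X i) ≤ ((d : ℝ) - k + e) * β := by
    have h := Finset.sum_le_card_nsmul (D \ A) (fun i => shannonEntropy μ (X i)) β
      fun i hi => by
        rw [hXnA i (Finset.mem_sdiff.1 hi).2]; exact hg i (Finset.mem_sdiff.1 hi).1
    rw [Finset.card_sdiff_of_subset hAD, hA, hD, nsmul_eq_mul, Nat.cast_sub hdk.le,
      Nat.cast_sub hek] at h
    linarith
  rw [← Finset.sum_sdiff hAD] at hle
  have hk' : (0 : ℝ) < k := by exact_mod_cast hk
  have hden : (0 : ℝ) < (d : ℝ) - k + e := by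
    have : (k : ℝ) < d + e := by exact_mod_cast (show k < d + e by omega)
    linarith
  rw [div_le_iff₀ (mul_pos hk' hden)]
  have hmain : (e : ℝ) * (M / k) ≤ ((d : ℝ) - k + e) * β := by
    have : (k : ℝ) * (M / k) = M := by field_simp
    linarith
  calc (e : ℝ) * M = k * (e * (M / k)) := by field_simp
    _ ≤ k * (((d : ℝ) - k + e) * β) := mul_le_mul_of_nonneg_left hmain hk'.le
    _ = β * (k * ((d : ℝ) - k + e)) := by ring
end

section
/- Let r be a prime, m and k positive integers, and 1 ≤ e < r with e ≤ k − 1. Let v_0, …, v_{k−1} ∈ 𝔽_r^m and set Z = span{v_j − v_e : j ∈ {e+1, …, k−1}} (Z = {0} if k − 1 < e + 1). Then the following are equivalent: (a) there exists a set X ⊆ 𝔽_r^m with |X| = e·r^{m−1} such that X is a union of cosets of Z and, for every i ∈ {0, …, e−1}, ⋃_{l=0}^{r−1} (X + l·(v_i − v_e)) = 𝔽_r^m; (b) for every i ∈ {0, …, e−1}, v_i − v_e ∉ Z. -/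
/-!
If some `w = v i - v e` lies in `Z`, all translates of `X` by multiples of `w` equal `X`, so the
covering condition forces `X` to be the whole space, which has `r ^ m > e * r ^ (m - 1)` elements.

Conversely, `Z` and the vectors `v i - v e` (fewer than `r` of them, none in `Z`) admit a linear
functional `φ` that vanishes on `Z` and at none of these vectors (`exists_dual_separating`). Take
for `X` the union of `e` fibers of `φ`: each fiber has `r ^ (m - 1)` elements (`card_fiber`), `X` is
invariant under `Z ≤ ker φ`, and along a direction `w` with `φ w ≠ 0` every line meets each fiber.
-/

/-- Over a field with `r` elements, finitely many vectors outside `Z`, fewer than `r` in number,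
can be kept off the kernel of a single functional vanishing on `Z`. By induction: if `φ` works for
the first `n` vectors and `ψ` for the next one, then `c • φ + ψ` works for all of them as soon as
`c` avoids the at most `n + 1 < r` values `-ψ (w i) / φ (w i)`. -/
lemma exists_dual_separating (r : ℕ) [Fact r.Prime] {V : Type*} [AddCommGroup V]
    [Module (ZMod r) V] (Z : Submodule (ZMod r) V) (w : ℕ → V) (n : ℕ) (hn : n < r)
    (hw : ∀ i < n, w i ∉ Z) :
    ∃ φ : V →ₗ[ZMod r] ZMod r, (∀ z ∈ Z, φ z = 0) ∧ ∀ i < n, φ (w i) ≠ 0 := by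
  induction n with
  | zero => exact ⟨0, by simp, by simp⟩
  | succ n ih =>
    obtain ⟨φ, hφZ, hφ⟩ := ih (by omega) (fun i hi => hw i (by omega))
    obtain ⟨ψ, hψ, hψZ⟩ := Submodule.exists_le_ker_of_notMem (hw n (by omega))
    have hc : ∃ c : ZMod r,
        c ∉ (Finset.range (n + 1)).image (fun i => -ψ (w i) / φ (w i)) := by
      by_contra! h
      have h1 := Finset.card_le_card (fun c _ => h c : (Finset.univ : Finset (ZMod r)) ⊆ _)
      have h2 := (Finset.card_image_le (s := Finset.range (n + 1))
        (f := fun i => -ψ (w i) / φ (w i)))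
      rw [Finset.card_univ, ZMod.card] at h1
      rw [Finset.card_range] at h2
      omega
    obtain ⟨c, hc⟩ := hc
    refine ⟨c • φ + ψ, fun z hz => ?_, fun i hi h => ?_⟩
    · have : ψ z = 0 := hψZ hz
      simp [hφZ z hz, this]
    · simp only [LinearMap.add_apply, LinearMap.smul_apply, smul_eq_mul] at h
      by_cases h0 : φ (w i) = 0
      · -- only the last vector can lie in `ker φ`, and `ψ` does not vanish there
        have hin : i = n := by
          by_contra hne
          exact hφ i (by omega) h0
        subst hin
        rw [h0, mul_zero, zero_add] at h
        exact hψ h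
      · apply hc
        rw [Finset.mem_image]
        refine ⟨i, Finset.mem_range.2 hi, ?_⟩
        rw [div_eq_iff h0]
        linear_combination -h

/-- All fibers of a nonzero functional are translates of one another and partition the space. -/
lemma card_fiber (r : ℕ) [Fact r.Prime] [NeZero r] (m : ℕ) (hm : 0 < m)
    (φ : (Fin m → ZMod r) →ₗ[ZMod r] ZMod r) (u : Fin m → ZMod r) (hu : φ u ≠ 0)
    (a : ZMod r) :
    (Finset.univ.filter (fun x => φ x = a)).card = r ^ (m - 1) := by
  have htrans : ∀ b : ZMod r, (Finset.univ.filter (fun x => φ x = b)).card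
      = (Finset.univ.filter (fun x => φ x = a)).card := by
    intro b
    refine Finset.card_bij' (fun x _ => x + ((a - b) / φ u) • u)
      (fun x _ => x - ((a - b) / φ u) • u) ?_ ?_ ?_ ?_
    · intro x hx
      simp only [Finset.mem_filter, Finset.mem_univ, true_and] at hx ⊢
      simp [hx, div_mul_cancel₀ _ hu]
    · intro x hx
      simp only [Finset.mem_filter, Finset.mem_univ, true_and] at hx ⊢
      simp [hx, div_mul_cancel₀ _ hu]
    · intro x _
      simp
    · intro x _
      simp
  have hsum := Finset.card_eq_sum_card_fiberwise (s := Finset.univ) (t := Finset.univ) (f := φ)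
    (fun x _ => by simp)
  rw [Finset.sum_congr rfl (fun b _ => htrans b)] at hsum
  simp only [Finset.card_univ, Fintype.card_pi, ZMod.card, Finset.prod_const, Fintype.card_fin,
    Finset.sum_const, smul_eq_mul] at hsum
  obtain ⟨m, rfl⟩ : ∃ n, m = n + 1 := ⟨m - 1, by omega⟩
  rw [pow_succ'] at hsum
  exact (Nat.eq_of_mul_eq_mul_left (Nat.pos_of_ne_zero (NeZero.ne r)) hsum).symm

/-- Necessary and sufficient condition for the existence of a set of accessed rows giving
optimal rebuilding of the `e` erased columns `0, …, e−1` of a general zigzag code generated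
by `v 0, …, v (k−1) ∈ 𝔽_r^m`: there is a set `X` of `e·r^(m−1)` rows which is a union of
cosets of `Z = span{v j − v e : e+1 ≤ j ≤ k−1}` and with `⋃_{l<r} (X + l·(v i − v e)) = 𝔽_r^m`
for every erased column `i`, if and only if `v i − v e ∉ Z` for every erased column `i`. -/
theorem optimal_rebuilding_set_exists_iff
    (r : ℕ) [Fact r.Prime] [NeZero r] (m k e : ℕ) (hm : 0 < m) (hk : 0 < k)
    (he : 1 ≤ e) (her : e < r) (hek : e < k)
    (v : ℕ → (Fin m → ZMod r)) :
    (∃ X : Finset (Fin m → ZMod r),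
        X.card = e * r ^ (m - 1) ∧
        (∀ z ∈ Submodule.span (ZMod r) {x | ∃ j, e + 1 ≤ j ∧ j < k ∧ x = v j - v e},
          X.image (fun x => x + z) = X) ∧
        (∀ i < e,
          (Finset.range r).biUnion (fun l => X.image (fun x => x + l • (v i - v e)))
            = Finset.univ))
    ↔ (∀ i < e,
        v i - v e ∉ Submodule.span (ZMod r) {x | ∃ j, e + 1 ≤ j ∧ j < k ∧ x = v j - v e}) := by
  set Z := Submodule.span (ZMod r) {x | ∃ j, e + 1 ≤ j ∧ j < k ∧ x = v j - v e} with hZ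
  have hr : 0 < r := by omega
  constructor
  · rintro ⟨X, hcard, hinv, hcov⟩ i hi hmem
    have hX : X = Finset.univ := by
      rw [← hcov i hi]
      ext y
      simp only [Finset.mem_biUnion, Finset.mem_range]
      constructor
      · intro hy
        exact ⟨0, hr, by simpa using hy⟩
      · rintro ⟨l, _, hy⟩
        rwa [hinv _ (Z.smul_of_tower_mem l hmem)] at hy
    rw [hX] at hcard
    simp only [Finset.card_univ, Fintype.card_pi, ZMod.card, Finset.prod_const,
      Fintype.card_fin] at hcard
    obtain ⟨m, rfl⟩ : ∃ n, m = n + 1 := ⟨m - 1, by omega⟩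
    rw [pow_succ'] at hcard
    have := Nat.eq_of_mul_eq_mul_right (pow_pos hr m) hcard
    omega
  · intro h
    obtain ⟨φ, hφZ, hφ⟩ := exists_dual_separating r Z (fun i => v i - v e) e her h
    obtain ⟨A, -, hA⟩ := Finset.exists_subset_card_eq
      (s := (Finset.univ : Finset (ZMod r))) (n := e) (by rw [Finset.card_univ, ZMod.card]; omega)
    refine ⟨Finset.univ.filter (fun x => φ x ∈ A), ?_, ?_, ?_⟩
    · rw [Finset.card_eq_sum_card_fiberwise (t := A) (f := φ) (fun x hx => by simpa using hx),
        ← hA, ← smul_eq_mul, ← Finset.sum_const]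
      refine Finset.sum_congr rfl fun a ha => ?_
      rw [← card_fiber r m hm φ _ (hφ 0 (by omega)) a, Finset.filter_filter]
      congr 1
      ext x
      simp only [Finset.mem_filter, Finset.mem_univ, true_and]
      exact ⟨fun hx => hx.2, fun hx => ⟨hx ▸ ha, hx⟩⟩
    · intro z hz
      ext y
      simp only [Finset.mem_image, Finset.mem_filter, Finset.mem_univ, true_and]
      constructor
      · rintro ⟨x, hx, rfl⟩
        rwa [map_add, hφZ z hz, add_zero]
      · intro hy
        exact ⟨y - z, by rwa [map_sub, hφZ z hz, sub_zero], by simp⟩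
    · intro i hi
      obtain ⟨a, ha⟩ : A.Nonempty := Finset.card_pos.1 (by omega)
      ext y
      simp only [Finset.mem_biUnion, Finset.mem_range, Finset.mem_image, Finset.mem_filter,
        Finset.mem_univ, true_and, iff_true]
      -- `l` is the step count taking the fiber over `a` to the fiber through `y`
      refine ⟨((φ y - a) / φ (v i - v e)).val, ZMod.val_lt _,
        y - ((φ y - a) / φ (v i - v e)).val • (v i - v e), ?_, by simp⟩
      have : φ (v i - v e) ≠ 0 := hφ i hi
      rw [map_sub, map_nsmul, nsmul_eq_mul, ZMod.natCast_zmod_val, div_mul_cancel₀ _ this]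
      simpa using ha
end

section
/- Let F be a field, n and e positive integers, and S ⊆ {1, …, n} × {1, …, n} a set of positions such that every row index i ∈ {1, …, n} occurs in exactly e pairs of S and every column index j ∈ {1, …, n} occurs in exactly e pairs of S. Let M be the n × n matrix over the polynomial ring F[x_{(i,j)} : (i,j) ∈ S] defined by M_{i,j} = x_{(i,j)} if (i,j) ∈ S and M_{i,j} = 0 otherwise. Then det(M) is a nonzero polynomial. (Consequently, over a sufficiently large field there is an assignment of nonzero values to the indeterminates making M invertible.) -/
/-!
A bipartite graph that is regular of positive degree satisfies Hall's condition: the edges leaving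
a set `A` of rows number `e * #A`, and they all end in the neighbourhood of `A`, which receives at
most `e` edges per column. Hence there is a permutation `σ` with `(i, σ i) ∈ S` for all `i`
(`exists_perm_mem_of_regular`). Setting the indeterminates on the graph of `σ` to `1` and all
others to `0` turns the matrix into the permutation matrix of `σ`, whose determinant is `±1`; so the
determinant polynomial has a nonzero value.
-/

/-- A bipartite graph, regular of positive degree `e`, on two copies of `Fin n`,
given by its edge set `S`, has a perfect matching. -/
theorem exists_perm_mem_of_regular (n e : ℕ) (he : 0 < e) (S : Finset (Fin n × Fin n))
    (hrow : ∀ i : Fin n, (S.filter (fun q => q.1 = i)).card = e)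
    (hcol : ∀ j : Fin n, (S.filter (fun q => q.2 = j)).card = e) :
    ∃ σ : Equiv.Perm (Fin n), ∀ i, (i, σ i) ∈ S := by
  obtain ⟨f, hf, hfS⟩ := (Fintype.all_card_le_filter_rel_iff_exists_injective
    (fun i j : Fin n => (i, j) ∈ S)).1 (by
      intro A
      refine Nat.le_of_mul_le_mul_right
        (Finset.card_mul_le_card_mul (fun i j : Fin n => (i, j) ∈ S) (m := e) (n := e) ?_ ?_) he
      · intro i hi
        rw [← hrow i]
        refine Finset.card_le_card_of_injOn Prod.snd ?_ ?_
        · rintro ⟨a, b⟩ h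
          simp only [Finset.coe_filter, Set.mem_ofPred_eq] at h
          obtain ⟨h, rfl⟩ := h
          simpa [Finset.bipartiteAbove] using ⟨⟨a, hi, h⟩, h⟩
        · rintro ⟨a, b⟩ h ⟨c, d⟩ h' hbd
          simp_all
      · intro j _
        rw [← hcol j]
        refine Finset.card_le_card_of_injOn (fun i => (i, j)) ?_ ?_
        · intro i h
          simp_all [Finset.bipartiteBelow]
        · intro a _ b _ h
          simpa using h)
  exact ⟨Equiv.ofBijective f (Finite.injective_iff_bijective.1 hf), hfS⟩

/-- If `S` is a set of positions in an `n × n` matrix such that every row index and every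
column index occurs in exactly `e` pairs of `S`, then the matrix whose `(i,j)` entry is the
indeterminate `x_{(i,j)}` for `(i,j) ∈ S` and `0` otherwise has nonzero determinant as a
polynomial (Hall's marriage theorem argument). -/
theorem det_of_indeterminate_matrix_ne_zero
    (F : Type*) [Field F] (n e : ℕ) (hn : 0 < n) (he : 0 < e)
    (S : Finset (Fin n × Fin n))
    (hrow : ∀ i : Fin n, (S.filter (fun q => q.1 = i)).card = e)
    (hcol : ∀ j : Fin n, (S.filter (fun q => q.2 = j)).card = e) :
    Matrix.det (Matrix.of fun i j : Fin n =>
        if h : (i, j) ∈ S then (MvPolynomial.X ⟨(i, j), h⟩ : MvPolynomial {q // q ∈ S} F)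
        else 0) ≠ 0 := by
  obtain ⟨σ, hσ⟩ := exists_perm_mem_of_regular n e he S hrow hcol
  intro h0
  -- Evaluate at the indicator function of the graph of `σ`.
  have h1 := congrArg (MvPolynomial.eval
    (fun q : {q // q ∈ S} => if σ q.1.1 = q.1.2 then (1 : F) else 0)) h0
  rw [RingHom.map_det, map_zero] at h1
  have h2 : (MvPolynomial.eval
      (fun q : {q // q ∈ S} => if σ q.1.1 = q.1.2 then (1 : F) else 0)).mapMatrix
      (Matrix.of fun i j : Fin n =>
        if h : (i, j) ∈ S then (MvPolynomial.X ⟨(i, j), h⟩ : MvPolynomial {q // q ∈ S} F)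
        else 0) = σ.permMatrix F := by
    ext i j
    by_cases h : (i, j) ∈ S
    · simp [h, Equiv.Perm.permMatrix, PEquiv.toMatrix_apply, eq_comm]
    · have hne : σ i ≠ j := by
        rintro rfl
        exact h (hσ i)
      simp [h, hne, Equiv.Perm.permMatrix, PEquiv.toMatrix_apply]
  rw [h2, Matrix.det_permutation] at h1
  rcases Int.units_eq_one_or (Equiv.Perm.sign σ) with h | h <;> simp [h] at h1
end

section
/- Let r be a prime, m a positive integer, and S a finite set of vectors in 𝔽_r^m. If S satisfies property e for some integer 1 ≤ e ≤ |S|, then S satisfies property a for every integer a with e ≤ a ≤ |S|. -/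
/-- A finite set `S` of vectors in `𝔽_r^m` satisfies *property `e`* if for every subset
`A ⊆ S` of size `e`, every `u ∈ A` and every `v ∈ S \ A`, one has
`u − v ∉ span{w − v : w ∈ S \ A}`. -/
def PropertyE {r m : ℕ} (S : Finset (Fin m → ZMod r)) (e : ℕ) : Prop :=
  ∀ A ⊆ S, A.card = e → ∀ u ∈ A, ∀ v ∈ S \ A,
    u - v ∉ Submodule.span (ZMod r) {x | ∃ w ∈ S \ A, x = w - v}

/-- Monotonicity of property `e`: if `S` satisfies property `e`, then it satisfies
property `a` for every `e ≤ a ≤ |S|`. -/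
theorem propertyE_mono
    (r : ℕ) [Fact r.Prime] (m : ℕ) (hm : 0 < m)
    (S : Finset (Fin m → ZMod r)) (e : ℕ) (he : 1 ≤ e) (heS : e ≤ S.card)
    (hprop : PropertyE S e) :
    ∀ a : ℕ, e ≤ a → a ≤ S.card → PropertyE S a := by
  intro a hea _ A hAS hA u hu v hv hmem
  -- Shrink `A` to a set `B` of size `e` still containing `u`; the span over `S \ B` only grows.
  obtain ⟨B, huB, hBA, hB⟩ := Finset.exists_subsuperset_card_eq
    (Finset.singleton_subset_iff.2 hu) (by simpa using he) (hA.symm ▸ hea)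
  have hsub : S \ A ⊆ S \ B := Finset.sdiff_subset_sdiff subset_rfl hBA
  refine hprop B (hBA.trans hAS) hB u (Finset.singleton_subset_iff.1 huB) v (hsub hv) ?_
  refine Submodule.span_mono ?_ hmem
  rintro x ⟨w, hw, rfl⟩
  exact ⟨w, hsub hw, rfl⟩
end

section
/- Let r be a prime, m a positive integer, and 1 ≤ e < r. Let v_0, …, v_{k−1} ∈ 𝔽_r^m be vectors such that the following holds: for every subset A ⊆ {0, …, k−1} with |A| = e, every i ∈ A, and every j ∉ A, one has v_i − v_j ∉ span{v_t − v_j : t ∉ A, t ≠ j}. Then k ≤ m + e. -/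
/-!
The span condition says that no `v i` with `i ∈ A` lies in the affine span of the surviving
vectors. If `k ≥ m + e + 1`, choose a set `C` of `k - e + 1 ≥ m + 2` indices. The vectors indexed
by `C` are affinely dependent in a space of dimension `m`, so some `v t` with `t ∈ C` lies in the
affine span of the others. Erasing the complement of `C \ {t}`, which has size `e` and contains `t`,
contradicts the condition.
-/

/-- Upper bound on the number of systematic columns of a zigzag code rebuilding any `e`
erasures optimally: if the generating vectors `v 0, …, v (k−1) ∈ 𝔽_r^m` satisfy property `e`
(for every erased set `A` of size `e`, every erased `i ∈ A` and every surviving `j ∉ A`,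
`v i − v j ∉ span{v t − v j : t ∉ A, t ≠ j}`), then `k ≤ m + e`. -/
theorem systematic_columns_upper_bound
    (r : ℕ) [Fact r.Prime] (m e k : ℕ) (hm : 0 < m) (he : 1 ≤ e) (her : e < r)
    (v : Fin k → (Fin m → ZMod r))
    (hprop : ∀ A : Finset (Fin k), A.card = e → ∀ i ∈ A, ∀ j : Fin k, j ∉ A →
      v i - v j ∉ Submodule.span (ZMod r)
        {x | ∃ t : Fin k, t ∉ A ∧ t ≠ j ∧ x = v t - v j}) :
    k ≤ m + e := by
  by_contra! hk
  obtain ⟨C, -, hC⟩ := Finset.exists_subset_card_eq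
    (show k - e + 1 ≤ (Finset.univ : Finset (Fin k)).card by simp; omega)
  have hdep : ¬ AffineIndependent (ZMod r) (fun c : C => v c) := by
    intro h
    have h1 := h.card_le_finrank_succ
    have h2 := Submodule.finrank_le (vectorSpan (ZMod r) (Set.range fun c : C => v c))
    simp only [Fintype.card_coe, Module.finrank_fin_fun] at h1 h2
    omega
  rw [affineIndependent_iff] at hdep
  push Not at hdep
  obtain ⟨s, w, hw, hwv, ⟨t, ht⟩, hts, hwt⟩ := hdep
  have hcard : (C.erase t).card = k - e := by
    rw [Finset.card_erase_of_mem ht]; omega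
  obtain ⟨j, hj⟩ := Finset.card_pos.mp (show 0 < (C.erase t).card by omega)
  refine hprop (C.erase t)ᶜ ?_ t (by simp) j (by simpa using hj) ?_
  · rw [Finset.card_compl, hcard, Fintype.card_fin]; omega
  -- The weights `w` sum to zero, so the relation may be re-based at `v j` and solved for `v t - v j`.
  rw [← Submodule.smul_mem_iff _ hwt]
  have hrel : ∑ c ∈ s, w c • (v c - v j) = 0 := by
    simp only [smul_sub, Finset.sum_sub_distrib, hwv, ← Finset.sum_smul, hw, zero_smul, sub_zero]
  rw [← Finset.add_sum_erase s _ hts] at hrel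
  rw [eq_neg_of_add_eq_zero_left hrel]
  refine Submodule.neg_mem _ (Submodule.sum_mem _ fun c hc => Submodule.smul_mem _ _ ?_)
  obtain ⟨c, hcC⟩ := c
  have hct : c ≠ t := by simpa using Finset.ne_of_mem_erase hc
  by_cases hcj : c = j
  · simp [hcj]
  · exact Submodule.subset_span ⟨c, by simp [hct, hcC], hcj, rfl⟩
end

section
/- Let r ≥ 2 and m ≥ 1 be integers, let F be a field, and let v_0, …, v_{k−1} ∈ (ℤ/rℤ)^m. For each j, let Q_j denote the r^m × r^m permutation matrix of the translation x ↦ x + v_j on (ℤ/rℤ)^m. Let 1 ≤ t ≤ r, let j_1 < j_2 < … < j_t be distinct indices in {0, …, k−1}, and let 0 ≤ i_1 < i_2 < … < i_t ≤ r−1. Then the determinant of the (t·r^m) × (t·r^m) block matrix G′ whose (a,b)-th block is λ_{j_b}^{i_a} · Q_{j_b}^{i_a}, viewed as a polynomial in the indeterminates λ_{j_1}, …, λ_{j_t} over F, is a nonzero polynomial; in particular, its monomial ∏_{s=1}^{t} λ_{j_s}^{i_s·r^m} has coefficient 1 or −1. -/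
/-! In the Leibniz expansion of `det G'`, the term of a permutation `σ` of the rows and columns
`(s, y)` is `± ∏ λ_{j_s}^{i_{σ(s,y).1}}` or zero. It contributes to the monomial
`∏ λ_{j_s}^{i_s · r^m}` only if, for every `s`, the exponents `i_{σ(s,y).1}` sum to
`i_s · r^m` over `y`. As `i` is strictly increasing, this forces `σ` to preserve every block
(`fst_eq_of_sum_eq`): once the blocks below `s` are preserved, they are full, so all exponents
coming from block `s` are at least `i_s`, hence equal to it. Inside its diagonal blocks `G'` is a
scaled permutation matrix (`shift_pow_apply`), so exactly one `σ` is left, and the coefficient is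
its sign. -/

/-- Powers of a translation matrix are the matrices of the iterated translation. -/
lemma shift_pow_apply {A R : Type*} [AddCommGroup A] [Fintype A] [DecidableEq A] [CommRing R]
    (w : A) (l : ℕ) (x y : A) :
    ((Matrix.of fun x y : A => if x = y + w then (1 : R) else 0) ^ l) x y =
      if x = y + l • w then 1 else 0 := by
  induction l generalizing x y with
  | zero => simp [Matrix.one_apply]
  | succ l ih =>
    rw [pow_succ, Matrix.mul_apply]
    simp only [ih, Matrix.of_apply, mul_ite, mul_one, mul_zero]
    rw [Finset.sum_ite_eq' Finset.univ (y + w)]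
    simp [succ_nsmul', add_assoc]

/-- A permutation of `Fin t × A` whose block-wise sums of `i ∘ fst` agree with those of the
identity preserves every block. -/
lemma fst_eq_of_sum_eq {A : Type*} [Fintype A] {t : ℕ} (i : Fin t → ℕ) (hi : StrictMono i)
    (σ : Equiv.Perm (Fin t × A))
    (h : ∀ s, ∑ y : A, i (σ (s, y)).1 = i s * Fintype.card A) (s : Fin t) :
    ∀ y, (σ (s, y)).1 = s := by
  induction s using WellFoundedLT.induction with
  | ind s ih =>
    have hge : ∀ y, i s ≤ i (σ (s, y)).1 := by
      intro y
      by_contra! hlt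
      have hlt' : (σ (s, y)).1 < s := hi.lt_iff_lt.1 hlt
      -- `σ` is injective from the finite block `(σ (s, y)).1` to itself, hence onto it,
      -- so `σ (s, y)` already has a preimage in that lower block.
      have hinj : Function.Injective fun z => (σ ((σ (s, y)).1, z)).2 := by
        intro z z' hz
        have := σ.injective (Prod.ext ((ih _ hlt' z).trans (ih _ hlt' z').symm) hz)
        simpa using this
      obtain ⟨z, hz⟩ := (Finite.injective_iff_surjective.1 hinj) (σ (s, y)).2
      have hσ := σ.injective (Prod.ext (ih _ hlt' z) hz)
      exact hlt'.ne (congrArg Prod.fst hσ)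
    have heq := (Finset.sum_eq_sum_iff_of_le (s := Finset.univ) (f := fun _ : A => i s)
      (fun y _ => hge y)).1 (by rw [h s]; simp [mul_comm])
    exact fun y => (hi.injective (heq y (Finset.mem_univ y))).symm

/-- The determinant of the block submatrix `G'` of the generator matrix of a general zigzag
code — whose `(a,b)`-th block is `λ_{j_b}^{i_a} · Q_{j_b}^{i_a}`, where `Q_j` is the
permutation matrix of the translation `x ↦ x + v j` on `(ℤ/rℤ)^m` — is a nonzero polynomial
in the indeterminates `λ_0, …, λ_{k−1}`; in particular the coefficient of the monomial
`∏_s λ_{j_s}^{i_s·r^m}` is `1` or `−1`. -/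
theorem zigzag_generator_submatrix_det_ne_zero
    (r m k t : ℕ) [NeZero r] (hr : 2 ≤ r) (hm : 1 ≤ m) (ht1 : 1 ≤ t) (htr : t ≤ r)
    (F : Type*) [Field F]
    (v : Fin k → (Fin m → ZMod r))
    (j : Fin t → Fin k) (hj : StrictMono j)
    (i : Fin t → ℕ) (hi : StrictMono i) (hir : ∀ a, i a ≤ r - 1) :
    let Q : Fin k → Matrix (Fin m → ZMod r) (Fin m → ZMod r) (MvPolynomial (Fin k) F) :=
      fun jj => Matrix.of fun x y => if x = y + v jj then 1 else 0
    let G' : Matrix (Fin t × (Fin m → ZMod r)) (Fin t × (Fin m → ZMod r))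
        (MvPolynomial (Fin k) F) :=
      Matrix.of fun p q =>
        (MvPolynomial.X (j q.1)) ^ (i p.1) * (Q (j q.1) ^ (i p.1)) p.2 q.2
    G'.det ≠ 0 ∧
      (MvPolynomial.coeff (∑ s : Fin t, Finsupp.single (j s) (i s * r ^ m)) G'.det = 1 ∨
       MvPolynomial.coeff (∑ s : Fin t, Finsupp.single (j s) (i s * r ^ m)) G'.det = -1) := by
  classical
  intro Q G'
  have hcard : Fintype.card (Fin m → ZMod r) = r ^ m := by simp [ZMod.card]
  -- the only permutation contributing to the coefficient
  let τ : Equiv.Perm (Fin t × (Fin m → ZMod r)) :=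
    Equiv.prodShear (Equiv.refl _) fun s => Equiv.addRight (i s • v (j s))
  have hτ : ∀ q, τ q = (q.1, q.2 + i q.1 • v (j q.1)) := fun q => rfl
  have hG : ∀ p q, G' p q = MvPolynomial.monomial (Finsupp.single (j q.1) (i p.1))
      (if p.2 = q.2 + i p.1 • v (j q.1) then (1 : F) else 0) := by
    intro p q
    simp only [G', Q, Matrix.of_apply]
    rw [shift_pow_apply, MvPolynomial.X_pow_eq_monomial]
    split_ifs <;> simp
  have hterm : ∀ σ : Equiv.Perm (Fin t × (Fin m → ZMod r)), ∏ q, G' (σ q) q =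
      MvPolynomial.monomial (∑ q, Finsupp.single (j q.1) (i (σ q).1))
        (∏ q, if (σ q).2 = q.2 + i (σ q).1 • v (j q.1) then (1 : F) else 0) := by
    intro σ
    simp only [hG]
    rw [MvPolynomial.monomial_sum_prod]
  have hexp : ∀ σ : Equiv.Perm (Fin t × (Fin m → ZMod r)),
      ∑ q, Finsupp.single (j q.1) (i (σ q).1) =
        ∑ s : Fin t, Finsupp.single (j s) (∑ y, i (σ (s, y)).1) := by
    intro σ
    rw [Fintype.sum_prod_type]
    simp only [Finsupp.single_finsetSum]
  have hcoeff : MvPolynomial.coeff (∑ s : Fin t, Finsupp.single (j s) (i s * r ^ m)) G'.det =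
      ((Equiv.Perm.sign τ : ℤ) : F) := by
    rw [Matrix.det_apply', MvPolynomial.coeff_sum, Finset.sum_eq_single τ]
    · rw [← map_intCast (MvPolynomial.C (R := F) (σ := Fin k)), MvPolynomial.coeff_C_mul, hterm,
        MvPolynomial.coeff_monomial, hexp]
      simp [hτ, mul_comm]
    · intro σ _ hne
      rw [← map_intCast (MvPolynomial.C (R := F) (σ := Fin k)), MvPolynomial.coeff_C_mul, hterm,
        MvPolynomial.coeff_monomial]
      split_ifs with hE
      · rw [hexp] at hE
        have hfst := fst_eq_of_sum_eq i hi σ (fun s => by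
          have := DFunLike.congr_fun hE (j s)
          simpa [Finsupp.finsetSum_apply, Finsupp.single_apply, hj.injective.eq_iff, hcard]
            using this)
        obtain ⟨q, hq⟩ : ∃ q, σ q ≠ τ q := by
          by_contra! hall
          exact hne (Equiv.ext hall)
        rw [Finset.prod_eq_zero (Finset.mem_univ q), mul_zero]
        rw [if_neg]
        intro h2
        have h1 : (σ q).1 = q.1 := hfst q.1 q.2
        exact hq (Prod.ext h1 (by rw [h2, h1, hτ]))
      · simp
    · simp
  have hpm : ((Equiv.Perm.sign τ : ℤ) : F) = 1 ∨ ((Equiv.Perm.sign τ : ℤ) : F) = -1 := by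
    rcases Int.units_eq_one_or (Equiv.Perm.sign τ) with h | h <;> simp [h]
  refine ⟨fun h0 => ?_, by rwa [hcoeff]⟩
  rw [h0, MvPolynomial.coeff_zero] at hcoeff
  rw [← hcoeff] at hpm
  simp at hpm
end

section
/- Let r ≥ 2 and m ≥ 1 be integers and let v_0, …, v_{k−1} ∈ (ℤ/rℤ)^m. For each j, let Q_j denote the r^m × r^m permutation matrix of the translation x ↦ x + v_j on (ℤ/rℤ)^m. Then for every sufficiently large finite field F there exist nonzero scalars λ_0, …, λ_{k−1} ∈ F such that for every 1 ≤ t ≤ r, every choice of distinct indices j_1, …, j_t ∈ {0, …, k−1}, and every choice of distinct parity indices i_1, …, i_t ∈ {0, …, r−1}, the (t·r^m) × (t·r^m) block matrix whose (a,b)-th block is λ_{j_b}^{i_a} · Q_{j_b}^{i_a} is invertible over F. (That is, the general zigzag code with these coefficients is an MDS code: it can recover any r node erasures.) -/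
/-!
The coefficients are taken to be powers `λ_j = x ^ j` of a single element `x : F`.  For fixed
systematic indices `j` and parity indices `i`, the determinant of the block matrix is then the
value at `x` of an integer polynomial, each Leibniz term of which is a monomial of degree
`∑ q, i (σ q).1 * j q.1`.  By the rearrangement inequality the largest possible exponent is
attained exactly by those permutations that match the block rows with the block columns in
increasing order of `i` and `j` (`fst_perm_eq_of_sum_eq`).  Hence the coefficient of the
polynomial in that degree is the determinant of a block diagonal matrix whose blocks are powers of
translation matrices (`coeff_det_blocks`), which is a unit of `ℤ`.

The polynomial therefore stays nonzero over every field (`exists_poly_of_indices`).  The product of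
these finitely many polynomials and of `X` has a degree that does not depend on `F`, so every field
with more elements than this degree contains an `x` at which none of the factors vanishes.
-/

open Polynomial

/-- If block rows and block columns are sorted compatibly by `a` and `e`, a permutation of the
indices attaining the maximal rearrangement sum preserves the blocks. -/
lemma fst_perm_eq_of_sum_eq {T G : Type*} [Fintype T] [Fintype G] (a e : T → ℕ)
    (ha : Function.Injective a) (he : Function.Injective e) (hae : Monovary a e)
    (σ : Equiv.Perm (T × G))
    (h : ∑ q, a (σ q).1 * e q.1 = ∑ q : T × G, a q.1 * e q.1) (q : T × G) :
    (σ q).1 = q.1 := by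
  classical
  have hmono : Monovary (fun q : T × G => a q.1) (fun q : T × G => e q.1) :=
    fun x y hxy => hae hxy
  have hσ : Monovary ((fun q : T × G => a q.1) ∘ σ) (fun q : T × G => e q.1) :=
    hmono.sum_comp_perm_mul_eq_sum_mul_iff.1 h
  have hle : ∀ q : T × G, a q.1 ≤ a (σ q).1 := by
    intro q
    by_contra! hlt
    -- Otherwise `σ` would inject `S ∪ {q}` into `S`, where `S` is the set of indices below `q`.
    set S : Finset (T × G) := Finset.univ.filter fun q' => a q'.1 < a q.1 with hS
    have hsub : (insert q S).image σ ⊆ S := by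
      intro y hy
      obtain ⟨q', hq', rfl⟩ := Finset.mem_image.1 hy
      rcases Finset.mem_insert.1 hq' with rfl | hq'
      · simpa [hS] using hlt
      · have hq'a : a q'.1 < a q.1 := by simpa [hS] using hq'
        have hq'e : e q'.1 < e q.1 := by
          rcases lt_trichotomy (e q'.1) (e q.1) with h1 | h1 | h1
          · exact h1
          · rw [he h1] at hq'a
            exact absurd hq'a (lt_irrefl _)
          · exact absurd (hae h1) (not_le.2 hq'a)
        have hσle : a (σ q').1 ≤ a (σ q).1 := hσ hq'e
        simpa [hS] using hσle.trans_lt hlt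
    have hcard := Finset.card_le_card hsub
    rw [Finset.card_image_of_injective _ σ.injective,
      Finset.card_insert_of_notMem (by simp [hS])] at hcard
    omega
  have hsum : ∑ q : T × G, a q.1 = ∑ q, a (σ q).1 :=
    (Equiv.sum_comp σ fun q : T × G => a q.1).symm
  exact ha ((Finset.sum_eq_sum_iff_of_le fun q _ => hle q).1 hsum q (Finset.mem_univ q)).symm

/-- The coefficient in the maximal degree only sees the diagonal blocks, since by
`fst_perm_eq_of_sum_eq` only block-preserving permutations contribute to it. -/
lemma coeff_det_blocks {T G : Type*} [Fintype T] [Fintype G] [DecidableEq T] [DecidableEq G]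
    (a e : T → ℕ) (ha : Function.Injective a) (he : Function.Injective e) (hae : Monovary a e)
    (A : Matrix (T × G) (T × G) ℤ) :
    (Matrix.det (Matrix.of fun p q : T × G =>
        (X : ℤ[X]) ^ (a p.1 * e q.1) * C (A p q))).coeff (∑ q : T × G, a q.1 * e q.1) =
      Matrix.det (Matrix.of fun p q : T × G => if p.1 = q.1 then A p q else 0) := by
  rw [Matrix.det_apply, Matrix.det_apply, finsetSum_coeff]
  refine Finset.sum_congr rfl fun σ _ => ?_
  rw [Units.smul_def, Units.smul_def, coeff_smul]
  congr 1
  simp only [Matrix.of_apply]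
  rw [Finset.prod_mul_distrib, Finset.prod_pow_eq_pow_sum, ← map_prod, coeff_mul_C, coeff_X_pow]
  by_cases hσ : ∀ q, (σ q).1 = q.1
  · simp [hσ]
  · rw [if_neg fun h => hσ (fst_perm_eq_of_sum_eq a e ha he hae σ h.symm)]
    push Not at hσ
    obtain ⟨q, hq⟩ := hσ
    rw [zero_mul, Finset.prod_eq_zero (Finset.mem_univ q) (if_neg hq)]

/-- The permutation matrix of the translation `x ↦ x + v`. -/
def translationMatrix {G : Type*} [AddCommGroup G] [DecidableEq G] (R : Type*) [CommRing R]
    (v : G) : Matrix G G R :=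
  Matrix.of fun x y => if x = y + v then 1 else 0

lemma isUnit_translationMatrix {G : Type*} [AddCommGroup G] [Fintype G] [DecidableEq G]
    (R : Type*) [CommRing R] (v : G) : IsUnit (translationMatrix R v) := by
  have h : translationMatrix R v * translationMatrix R (-v) = 1 := by
    ext x y
    simp [translationMatrix, Matrix.mul_apply, Matrix.one_apply]
  exact IsUnit.of_mul_eq_one _ h

lemma map_translationMatrix {G : Type*} [AddCommGroup G] [DecidableEq G] (R : Type*)
    [CommRing R] (v : G) :
    (translationMatrix ℤ v).map (Int.castRingHom R) = translationMatrix R v := by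
  ext x y
  simp only [translationMatrix, Matrix.map_apply, Matrix.of_apply]
  split_ifs <;> simp

/-- The permutation sends the position of the `n`-th smallest value of `e` to that of `a`. -/
lemma exists_perm_monovary {t : ℕ} (a e : Fin t → ℕ) :
    ∃ π : Equiv.Perm (Fin t), Monovary (a ∘ π) e := by
  refine ⟨(Tuple.sort e).symm.trans (Tuple.sort a), fun x y hxy => ?_⟩
  have h : (Tuple.sort e).symm x ≤ (Tuple.sort e).symm y := by
    by_contra! hlt
    have := Tuple.monotone_sort e hlt.le
    simp only [Function.comp_apply, Equiv.apply_symm_apply] at this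
    omega
  exact Tuple.monotone_sort a h

/-- The invertibility of one block matrix with coefficients `x ^ e b` only requires `x` to avoid the
roots of a polynomial that is nonzero over every field. It has integer coefficients, so its degree
bounds the number of roots uniformly in the field. -/
lemma exists_poly_of_indices {G : Type*} [AddCommGroup G] [Fintype G] [DecidableEq G] {t : ℕ}
    (w : Fin t → G) (a e : Fin t → ℕ)
    (ha : Function.Injective a) (he : Function.Injective e) :
    ∃ P : ℤ[X], ∀ (F : Type) [Field F], P.map (Int.castRingHom F) ≠ 0 ∧
      ∀ x : F, (P.map (Int.castRingHom F)).eval x ≠ 0 →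
        IsUnit (Matrix.of fun p q : Fin t × G =>
          (x ^ e q.1) ^ a p.1 * (translationMatrix F (w q.1) ^ a p.1) p.2 q.2) := by
  obtain ⟨π, hπ⟩ := exists_perm_monovary a e
  set b : Fin t → ℕ := a ∘ π with hb
  let A : Matrix (Fin t × G) (Fin t × G) ℤ :=
    Matrix.of fun p q => (translationMatrix ℤ (w q.1) ^ b p.1) p.2 q.2
  let M : Matrix (Fin t × G) (Fin t × G) ℤ[X] :=
    Matrix.of fun p q => X ^ (b p.1 * e q.1) * C (A p q)
  have hcoeff := coeff_det_blocks b e (ha.comp π.injective) he hπ A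
  have hunit : IsUnit (Matrix.det (Matrix.of fun p q : Fin t × G =>
      if p.1 = q.1 then A p q else 0)) := by
    have hblock : (Matrix.of fun p q : Fin t × G => if p.1 = q.1 then A p q else 0) =
        (Matrix.blockDiagonal fun s => translationMatrix ℤ (w s) ^ b s).submatrix
          (Equiv.prodComm _ _) (Equiv.prodComm _ _) := by
      ext ⟨s, x⟩ ⟨s', y⟩
      by_cases hs : s = s'
      · subst hs
        simp [A, Matrix.blockDiagonal_apply]
      · simp [Matrix.blockDiagonal_apply, hs]
    rw [hblock, Matrix.det_submatrix_equiv_self, Matrix.det_blockDiagonal]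
    refine IsUnit.prod_univ_iff.2 fun s => ?_
    rw [← Matrix.isUnit_iff_isUnit_det]
    exact (isUnit_translationMatrix ℤ (w s)).pow _
  refine ⟨M.det, fun F _ => ⟨fun h0 => ?_, fun x hx => ?_⟩⟩
  · have h1 := congrArg (fun p : F[X] => p.coeff (∑ q : Fin t × G, b q.1 * e q.1)) h0
    simp only [coeff_map, coeff_zero] at h1
    rw [hcoeff] at h1
    exact (hunit.map (Int.castRingHom F)).ne_zero h1
  · rw [← coe_mapRingHom, ← coe_evalRingHom, RingHom.map_det, RingHom.map_det] at hx
    rw [← Matrix.isUnit_submatrix_equiv (Equiv.prodCongr π (Equiv.refl G)) (Equiv.refl _),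
      Matrix.isUnit_iff_isUnit_det, isUnit_iff_ne_zero]
    convert hx using 2
    ext p q
    have hQ : ((translationMatrix ℤ (w q.1) ^ b p.1) p.2 q.2 : F) =
        (translationMatrix F (w q.1) ^ b p.1) p.2 q.2 := by
      rw [← map_translationMatrix F, ← Matrix.map_pow]
      rfl
    simp only [Matrix.submatrix_apply, Matrix.of_apply, RingHom.mapMatrix_apply, Matrix.map_apply,
      M, A, coe_mapRingHom, coe_evalRingHom]
    simp only [hb, Function.comp_apply] at hQ
    simp [← hQ, hb, ← pow_mul, mul_comm]

/-- The general zigzag code with `r` parities generated by `v 0, …, v (k−1) ∈ (ℤ/rℤ)^m` can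
be made MDS: for every sufficiently large finite field `F` there are nonzero coefficients
`λ_0, …, λ_{k−1}` such that for all `1 ≤ t ≤ r`, all distinct systematic indices
`j_1, …, j_t` and distinct parity indices `i_1, …, i_t`, the block matrix with
`(a,b)`-block `λ_{j_b}^{i_a} · Q_{j_b}^{i_a}` is invertible, where `Q_j` is the permutation
matrix of `x ↦ x + v j`. -/
theorem zigzag_code_is_MDS_over_large_field
    (r m k : ℕ) [NeZero r] (hr : 2 ≤ r) (hm : 1 ≤ m) (hk : 0 < k)
    (v : Fin k → (Fin m → ZMod r)) :
    ∃ N : ℕ, ∀ (F : Type) [Field F] [Fintype F], N ≤ Fintype.card F →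
      ∃ lam : Fin k → F, (∀ jj : Fin k, lam jj ≠ 0) ∧
        ∀ t : ℕ, 1 ≤ t → t ≤ r →
          ∀ j : Fin t → Fin k, Function.Injective j →
          ∀ i : Fin t → Fin r, Function.Injective i →
            IsUnit (Matrix.of fun p q : Fin t × (Fin m → ZMod r) =>
              lam (j q.1) ^ (i p.1 : ℕ) *
                (((Matrix.of fun x y : Fin m → ZMod r =>
                    if x = y + v (j q.1) then (1 : F) else 0)) ^ (i p.1 : ℕ)) p.2 q.2) := by
  classical
  -- Erasure patterns; here `t` is bounded by `r` so that they form a finite type.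
  let I := (t : Fin (r + 1)) × ((Fin t ↪ Fin k) × (Fin t ↪ Fin r))
  have key : ∀ s : I, _ := fun s => exists_poly_of_indices (fun b => v (s.2.1 b))
    (fun b => (s.2.2 b : ℕ)) (fun b => (s.2.1 b : ℕ))
    (Fin.val_injective.comp s.2.2.injective) (Fin.val_injective.comp s.2.1.injective)
  choose P hP using key
  refine ⟨(X * ∏ s, P s).natDegree + 1, fun F _ _ hN => ?_⟩
  have hne : (X * ∏ s, P s).map (Int.castRingHom F) ≠ 0 := by
    rw [Polynomial.map_mul, Polynomial.map_prod, map_X]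
    exact mul_ne_zero X_ne_zero (Finset.prod_ne_zero_iff.2 fun s _ => (hP s F).1)
  obtain ⟨x, hx⟩ : ∃ x : F, ((X * ∏ s, P s).map (Int.castRingHom F)).eval x ≠ 0 := by
    by_contra! hall
    refine hne (eq_zero_of_natDegree_lt_card_of_eval_eq_zero _ Function.injective_id hall ?_)
    exact natDegree_map_le.trans_lt hN
  rw [Polynomial.map_mul, Polynomial.map_prod, map_X, eval_mul, eval_X, eval_prod,
    mul_ne_zero_iff, Finset.prod_ne_zero_iff] at hx
  refine ⟨fun jj => x ^ (jj : ℕ), fun jj => pow_ne_zero _ hx.1, ?_⟩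
  intro t _ htr j hj i hi
  let s : I := ⟨⟨t, Nat.lt_succ_of_le htr⟩, ⟨j, hj⟩, ⟨i, hi⟩⟩
  exact (hP s F).2 x (hx.2 s (Finset.mem_univ s))
end

section
/- Let F be a field, m ≥ 1, and let v_0, …, v_{k−1} ∈ 𝔽_2^m be distinct vectors. Let β_{x,j} ∈ F be nonzero scalars for x ∈ 𝔽_2^m and j ∈ {0, …, k−1}, and consider the (k+2, k) general zigzag code whose codewords are arrays a = (a_{x,j}) ∈ F^{𝔽_2^m × k} together with the two parity columns r_x = Σ_{j=0}^{k−1} a_{x,j} and z_x = Σ_{j=0}^{k−1} β_{x+v_j, j} · a_{x+v_j, j}. Then this code is MDS (every codeword of the full (k+2)-column array that vanishes on all but at most 2 columns is zero; equivalently, any 2 column erasures can be recovered) if and only if for all j ≠ t in {0, …, k−1} and all x ∈ 𝔽_2^m, setting x′ = x + v_t + v_j, one has β_{x,t}·β_{x′,t} ≠ β_{x,j}·β_{x′,j}. -/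
/-!
If exactly two information columns `j ≠ t` may be nonzero, the row parities force
`a_{x,j} = -a_{x,t}`, and the zigzag parities then become
`β_{x',j} a_{x',t} = β_{x,t} a_{x,t}` with `x' = x + v_t + v_j`. Since `x ↦ x'` is an involution
without fixed points (`v` is injective), these equations split into `2 × 2` systems in
`(a_{x,t}, a_{x',t})`, with determinant `± (β_{x,t} β_{x',t} - β_{x,j} β_{x',j})`. So two erased
information columns are recoverable exactly when all these determinants are nonzero. If at most one
information column is nonzero, at least one parity column vanishes, and it shows that this column
is zero, because all `β_{x,j}` are nonzero.
-/

theorem zigzag_add_self {m : ℕ} (u : Fin m → ZMod 2) : u + u = 0 := by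
  ext i; exact CharTwo.add_self_eq_zero _

theorem zigzag_shift_shift {m : ℕ} (x p q : Fin m → ZMod 2) : x + p + q + p + q = x := by
  have hp := zigzag_add_self p
  have hq := zigzag_add_self q
  calc x + p + q + p + q = x + (p + p) + (q + q) := by abel
    _ = x := by rw [hp, hq]; simp

theorem zigzag_add_cancel {m : ℕ} (x p : Fin m → ZMod 2) : x + p + p = x := by
  rw [add_assoc, zigzag_add_self, add_zero]

/-- The involution `x ↦ x + v_t + v_j` has no fixed point. -/
theorem zigzag_shift_ne {m : ℕ} (x p q : Fin m → ZMod 2) (h : p ≠ q) : x + p + q ≠ x := by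
  intro e
  apply h
  have h1 : p + q = 0 := by
    rw [add_assoc] at e
    simpa using e
  calc p = p + q + q := (zigzag_add_cancel p q).symm
    _ = q := by rw [h1, zero_add]

/-- The `(k+2, k)` general zigzag code over `F` generated by distinct vectors
`v 0, …, v (k−1) ∈ 𝔽_2^m`, with row-sum parity `r_x = Σ_j a_{x,j}` and zigzag parity
`z_x = Σ_j β_{x+v_j,j}·a_{x+v_j,j}`, is MDS — every information array whose full
`(k+2)`-column codeword vanishes outside at most `2` columns is zero — if and only if
for all `j ≠ t` and all `x`, setting `x' = x + v t + v j`, one has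
`β_{x,t}·β_{x',t} ≠ β_{x,j}·β_{x',j}`. -/
theorem zigzag_two_parity_MDS_iff
    (F : Type*) [Field F] (m k : ℕ) (hm : 1 ≤ m) (hk : 0 < k)
    (v : Fin k → (Fin m → ZMod 2)) (hv : Function.Injective v)
    (β : (Fin m → ZMod 2) → Fin k → F) (hβ : ∀ x jj, β x jj ≠ 0) :
    (∀ (a : (Fin m → ZMod 2) → Fin k → F) (T : Finset (Fin (k + 2))),
        T.card ≤ 2 →
        (∀ c : Fin (k + 2), c ∉ T → ∀ x : Fin m → ZMod 2,
          (if h : (c : ℕ) < k then a x ⟨(c : ℕ), h⟩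
           else if (c : ℕ) = k then ∑ jj : Fin k, a x jj
           else ∑ jj : Fin k, β (x + v jj) jj * a (x + v jj) jj) = 0) →
        a = 0)
    ↔ (∀ j t : Fin k, j ≠ t → ∀ x : Fin m → ZMod 2,
        β x t * β (x + v t + v j) t ≠ β x j * β (x + v t + v j) j) := by
  constructor
  · intro H j t hjt x heq
    have hne := zigzag_shift_ne x (v t) (v j) (fun e => hjt (hv e).symm)
    have hss := zigzag_shift_shift x (v t) (v j)
    generalize hxs : x + v t + v j = xs at *
    -- `(g x, g xs)` is a kernel vector of the singular `2 × 2` system at the pair `{x, xs}`.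
    let g : (Fin m → ZMod 2) → F := fun y => if y = x then β xs j else if y = xs then β x t else 0
    let a : (Fin m → ZMod 2) → Fin k → F :=
      fun y i => if i = t then g y else if i = j then - g y else 0
    have ha0 : ∀ y i, i ≠ t ∧ i ≠ j → a y i = 0 := fun y i hi => by simp [a, hi.1, hi.2]
    have hat : ∀ y, a y t = g y := fun y => by simp [a]
    have haj : ∀ y, a y j = - g y := fun y => by simp [a, hjt]
    have hz : a = 0 := by
      refine H a {Fin.castAdd 2 j, Fin.castAdd 2 t} Finset.card_le_two ?_
      intro c hc y
      split_ifs with h1 h2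
      · refine ha0 _ _ ⟨?_, ?_⟩
        · rintro rfl
          exact hc (by simp [Fin.ext_iff])
        · rintro rfl
          exact hc (by simp [Fin.ext_iff])
      · rw [Finset.sum_eq_add t j hjt.symm (fun i _ hi => ha0 y i hi) (by simp) (by simp),
          hat, haj, add_neg_cancel]
      · rw [Finset.sum_eq_add t j hjt.symm (fun i _ hi => by rw [ha0 _ i hi, mul_zero])
          (by simp) (by simp), hat, haj]
        obtain ⟨w, rfl⟩ : ∃ w, y = w + v t := ⟨y + v t, (zigzag_add_cancel y (v t)).symm⟩
        rw [zigzag_add_cancel]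
        by_cases hw : w = x
        · subst hw
          rw [hxs]
          simp only [g, if_true, if_neg hne]
          ring
        · by_cases hws : w = xs
          · subst hws
            rw [hss]
            simp only [g, if_true, if_neg hne]
            linear_combination heq
          · have e1 : w + v t + v j ≠ x := by
              intro e
              apply hws
              rw [← hxs, ← e, zigzag_shift_shift]
            have e2 : w + v t + v j ≠ xs := by
              intro e
              apply hw
              rw [← hss, ← e, zigzag_shift_shift]
            simp [g, hw, hws, e1, e2]
    have h0 : a x t = 0 := by rw [hz]; rfl
    rw [hat] at h0
    exact hβ xs j (by simpa [g] using h0)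
  · intro H a T hT hc
    have hA : ∀ i : Fin k, Fin.castAdd 2 i ∉ T → ∀ x, a x i = 0 := fun i hi x => by
      simpa using hc _ hi x
    have hR : Fin.natAdd k (0 : Fin 2) ∉ T → ∀ x, ∑ i, a x i = 0 := fun hi x => by
      simpa using hc _ hi x
    have hZ : Fin.natAdd k (1 : Fin 2) ∉ T →
        ∀ x, ∑ i, β (x + v i) i * a (x + v i) i = 0 := fun hi x => by
      simpa using hc _ hi x
    have h3 : ∀ p q r : Fin (k + 2), p ∈ T → q ∈ T → p ≠ q → p ≠ r → q ≠ r → r ∉ T := by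
      intro p q r hp hq hpq hpr hqr hr
      have := Finset.two_lt_card.2 ⟨p, hp, q, hq, r, hr, hpq, hpr, hqr⟩
      omega
    have hcc : ∀ i l : Fin k, i ≠ l → Fin.castAdd 2 i ≠ Fin.castAdd 2 l := fun i l h e =>
      h (Fin.castAdd_injective k 2 e)
    have hcn : ∀ (i : Fin k) (l : Fin 2), Fin.castAdd 2 i ≠ Fin.natAdd k l := fun i l e => by
      have := congrArg Fin.val e
      simp at this
      omega
    by_contra hne
    obtain ⟨x, hx⟩ := Function.ne_iff.1 hne
    obtain ⟨t, hxt⟩ := Function.ne_iff.1 hx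
    have htT : Fin.castAdd 2 t ∈ T := by
      by_contra h
      exact hxt (hA t h x)
    by_cases hj : ∃ j, j ≠ t ∧ Fin.castAdd 2 j ∈ T
    · obtain ⟨j, hjt, hjT⟩ := hj
      have hcols : ∀ y i, i ≠ t ∧ i ≠ j → a y i = 0 := fun y i hi =>
        hA i (h3 _ _ _ htT hjT (hcc _ _ hjt.symm) (hcc _ _ hi.1.symm) (hcc _ _ hi.2.symm)) y
      have hrow : ∀ y, a y t + a y j = 0 := fun y => by
        rw [← hR (h3 _ _ _ htT hjT (hcc _ _ hjt.symm) (hcn _ _) (hcn _ _)) y]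
        exact (Finset.sum_eq_add t j hjt.symm (fun i _ hi => hcols y i hi)
          (by simp) (by simp)).symm
      have hzig : ∀ y, β y t * a y t + β (y + v t + v j) j * a (y + v t + v j) j = 0 := fun y => by
        have h := hZ (h3 _ _ _ htT hjT (hcc _ _ hjt.symm) (hcn _ _) (hcn _ _)) (y + v t)
        rw [Finset.sum_eq_add t j hjt.symm (fun i _ hi => by rw [hcols _ i hi, mul_zero])
          (by simp) (by simp), zigzag_add_cancel] at h
        exact h
      have e1 := hzig x
      have e2 := hzig (x + v t + v j)
      rw [zigzag_shift_shift] at e2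
      have r1 := hrow x
      have r2 := hrow (x + v t + v j)
      have hd := H j t hjt x
      generalize x + v t + v j = xs at *
      have hprod : (β x t * β xs t - β x j * β xs j) * a x t = 0 := by
        linear_combination β xs t * e1 - β xs t * β xs j * r2 + β xs j * e2 - β xs j * β x j * r1
      exact (mul_ne_zero (sub_ne_zero.2 hd) hxt) hprod
    · push Not at hj
      have hcols : ∀ i, i ≠ t → ∀ y, a y i = 0 := fun i hi => hA i (hj i hi)
      by_cases hk0 : Fin.natAdd k (0 : Fin 2) ∈ T
      · have h := hZ (h3 _ _ _ htT hk0 (hcn _ _) (hcn _ _) (by simp [Fin.ext_iff])) (x + v t)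
        rw [Finset.sum_eq_single t (fun i _ hi => by rw [hcols i hi, mul_zero]) (by simp),
          zigzag_add_cancel] at h
        exact mul_ne_zero (hβ x t) hxt h
      · have h := hR hk0 x
        rw [Finset.sum_eq_single t (fun i _ hi => hcols i hi x) (by simp)] at h
        exact hxt h
end

section
/- Let F be a field, m ≥ 1, and let v_0, …, v_{k−1} ∈ 𝔽_2^m be distinct vectors. Let β_{x,j} ∈ F be nonzero scalars satisfying, for all j ≠ t and all x ∈ 𝔽_2^m with x′ = x + v_t + v_j, the MDS condition β_{x,t}·β_{x′,t} ≠ β_{x,j}·β_{x′,j}. Suppose an array c = (c_{x,j}) ∈ F^{𝔽_2^m × k} satisfies both zero-parity conditions: Σ_{j=0}^{k−1} c_{x,j} = 0 and Σ_{j=0}^{k−1} β_{x+v_j,j} · c_{x+v_j,j} = 0 for every x ∈ 𝔽_2^m. If there exist a column index t and at most two positions (x_1, j_1), (x_2, j_2) with j_1 ≠ t and j_2 ≠ t such that c_{x,j} = 0 for every (x, j) with j ≠ t and (x, j) ∉ {(x_1, j_1), (x_2, j_2)}, then c = 0. (This is the uniqueness of decoding underlying the theorem that the (k+2, k) MDS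 general zigzag code can simultaneously correct one systematic node erasure and one systematic element error, i.e., beyond its minimum Hamming distance 3.) -/
/-!
Let `t` be the erased column. Eliminating `c x t` between the first parity at `x` and the second
parity at `x + v t` leaves, for every row `x`, a relation among the entries outside column `t`:
`∑ j, (β (x + v t + v j) j * c (x + v t + v j) j - β x t * c x j) = 0` (`elimination`).
A nonzero entry at `(x, j)` contributes to exactly the relations at the two distinct rows `x` and
`y = x + v t + v j`. With at most two nonzero entries, both relations can only be balanced if the
second entry involves the same pair of rows; injectivity of `v` then places it at `(y, j)`. The two
relations become a `2 × 2` system for the two entries, whose determinant is nonzero by the MDS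
condition. This is `entry_eq_zero`; once all entries outside column `t` vanish, so does column `t`
by the first parity.
-/

lemma vec_add_self {m : ℕ} (a : Fin m → ZMod 2) : a + a = 0 := by
  funext i
  exact CharTwo.add_self_eq_zero (a i)

lemma vec_add_shift_twice {m : ℕ} (x a b : Fin m → ZMod 2) : x + a + b + a + b = x := by
  calc x + a + b + a + b = x + (a + a) + (b + b) := by abel
    _ = x := by simp [vec_add_self]

lemma vec_eq_of_add_add_eq {m : ℕ} {x a b : Fin m → ZMod 2} (h : x + a + b = x) : a = b := by
  have h1 : a + b = 0 := by simpa [add_assoc] using h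
  calc a = a + b + b := by rw [add_assoc, vec_add_self, add_zero]
    _ = b := by rw [h1, zero_add]

/-- The entries outside column `t` satisfy one relation per row; the summand `j = t` is zero. -/
lemma elimination {F : Type*} [Field F] {m k : ℕ} {v : Fin k → (Fin m → ZMod 2)}
    {β c : (Fin m → ZMod 2) → Fin k → F}
    (hpar0 : ∀ x : Fin m → ZMod 2, ∑ jj : Fin k, c x jj = 0)
    (hpar1 : ∀ x : Fin m → ZMod 2, ∑ jj : Fin k, β (x + v jj) jj * c (x + v jj) jj = 0)
    (t : Fin k) (x : Fin m → ZMod 2) :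
    ∑ j : Fin k, (β (x + v t + v j) j * c (x + v t + v j) j - β x t * c x j) = 0 := by
  rw [Finset.sum_sub_distrib, hpar1 (x + v t), ← Finset.mul_sum, hpar0 x]
  simp

lemma elimination_self {F : Type*} [Field F] {m k : ℕ} (v : Fin k → (Fin m → ZMod 2))
    (β c : (Fin m → ZMod 2) → Fin k → F) (t : Fin k) (x : Fin m → ZMod 2) :
    β (x + v t + v t) t * c (x + v t + v t) t - β x t * c x t = 0 := by
  rw [add_assoc, vec_add_self, add_zero, sub_self]

/-- If the summand of `j` in the relation at row `x` is nonzero, some other column different from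
`t` has a nonzero entry taking part in that relation. -/
lemma exists_balancing_entry {F : Type*} [Field F] {m k : ℕ} {v : Fin k → (Fin m → ZMod 2)}
    {β c : (Fin m → ZMod 2) → Fin k → F}
    (hpar0 : ∀ x : Fin m → ZMod 2, ∑ jj : Fin k, c x jj = 0)
    (hpar1 : ∀ x : Fin m → ZMod 2, ∑ jj : Fin k, β (x + v jj) jj * c (x + v jj) jj = 0)
    (t : Fin k) (x : Fin m → ZMod 2) (j : Fin k)
    (hne : β (x + v t + v j) j * c (x + v t + v j) j - β x t * c x j ≠ 0) :
    ∃ i, i ≠ j ∧ i ≠ t ∧ (c x i ≠ 0 ∨ c (x + v t + v i) i ≠ 0) := by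
  by_contra! hcon
  apply hne
  rw [← elimination hpar0 hpar1 t x]
  symm
  apply Finset.sum_eq_single_of_mem j (Finset.mem_univ j)
  intro i _ hij
  rcases eq_or_ne i t with rfl | hit
  · exact elimination_self v β c i x
  · obtain ⟨h1, h2⟩ := hcon i hij hit
    simp [h1, h2]

/-- Outside column `t`, the first of the two positions that may carry a nonzero entry carries
zero. -/
lemma entry_eq_zero {F : Type*} [Field F] {m k : ℕ}
    {v : Fin k → (Fin m → ZMod 2)} (hv : Function.Injective v)
    {β c : (Fin m → ZMod 2) → Fin k → F} (hβ : ∀ x jj, β x jj ≠ 0)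
    (hMDS : ∀ j t : Fin k, j ≠ t → ∀ x : Fin m → ZMod 2,
      β x t * β (x + v t + v j) t ≠ β x j * β (x + v t + v j) j)
    (hpar0 : ∀ x : Fin m → ZMod 2, ∑ jj : Fin k, c x jj = 0)
    (hpar1 : ∀ x : Fin m → ZMod 2, ∑ jj : Fin k, β (x + v jj) jj * c (x + v jj) jj = 0)
    (t : Fin k) (x : Fin m → ZMod 2) (j : Fin k) (hj : j ≠ t) (q : (Fin m → ZMod 2) × Fin k)
    (hs : ∀ (x' : Fin m → ZMod 2) (i : Fin k),
      i ≠ t → (x', i) ≠ (x, j) → (x', i) ≠ q → c x' i = 0) :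
    c x j = 0 := by
  by_contra ha
  have hs' : ∀ x' i, i ≠ t → c x' i ≠ 0 → (x', i) ≠ (x, j) → q = (x', i) := by
    intro x' i hi hc hp
    by_contra hq
    exact hc (hs x' i hi hp (Ne.symm hq))
  have hxy : x + v t + v j ≠ x := fun h => hj (hv (vec_eq_of_add_add_eq h).symm)
  have hback : x + v t + v j + v t + v j = x := vec_add_shift_twice x (v t) (v j)
  by_cases hb : c (x + v t + v j) j = 0
  · -- Both relations need a second nonzero entry, in a column other than `j`.
    obtain ⟨i, hij, hit, hi⟩ := exists_balancing_entry hpar0 hpar1 t x j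
      (by simp [hb, hβ, ha])
    obtain ⟨l, hlj, hlt, hl⟩ := exists_balancing_entry hpar0 hpar1 t (x + v t + v j) j
      (by rw [hback]; simp [hb, hβ, ha])
    have hvi : v j ≠ v i := fun h => hij (hv h).symm
    have hqi : q = (x, i) ∨ q = (x + v t + v i, i) :=
      hi.imp (fun h => hs' _ _ hit h (by simp [hij])) (fun h => hs' _ _ hit h (by simp [hij]))
    have hql : q = (x + v t + v j, l) ∨ q = (x + v t + v j + v t + v l, l) :=
      hl.imp (fun h => hs' _ _ hlt h (by simp [hlj])) (fun h => hs' _ _ hlt h (by simp [hlj]))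
    have hli : l = i := by
      have h1 : q.2 = i := by rcases hqi with h | h <;> rw [h]
      have h2 : q.2 = l := by rcases hql with h | h <;> rw [h]
      exact h2.symm.trans h1
    subst hli
    have hshift : x + v t + v j + v t + v l = x + v j + v l := by
      calc x + v t + v j + v t + v l = x + v j + v l + (v t + v t) := by abel
        _ = x + v j + v l := by rw [vec_add_self, add_zero]
    rw [hshift] at hql
    rcases hqi with h | h <;> rcases hql with h' | h' <;>
      have e := (Prod.mk.inj (h.symm.trans h')).1
    · exact hxy e.symm
    · exact hvi (vec_eq_of_add_add_eq e.symm)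
    · exact hvi (add_left_cancel e).symm
    · have e' : v t = v j := by
        have := add_right_cancel e
        exact add_left_cancel this
      exact hj (hv e').symm
  · -- The second entry sits at `(y, j)`, and no other entry takes part in the two relations.
    have hq := hs' _ j hj hb (by simpa using hxy)
    have hz : ∀ x' i, i ≠ t → i ≠ j → c x' i = 0 := fun x' i hit hij =>
      hs x' i hit (by simp [hij]) (by simp [hq, hij])
    have hrel : ∀ w, β (w + v t + v j) j * c (w + v t + v j) j - β w t * c w j = 0 := by
      intro w
      by_contra hne
      obtain ⟨i, hij, hit, hi⟩ := exists_balancing_entry hpar0 hpar1 t w j hne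
      rcases hi with h | h
      · exact h (hz _ i hit hij)
      · exact h (hz _ i hit hij)
    have h1 := hrel x
    have h2 := hrel (x + v t + v j)
    rw [hback] at h2
    have hdet : (β x t * β (x + v t + v j) t - β x j * β (x + v t + v j) j) * c x j = 0 := by
      linear_combination (-β (x + v t + v j) t) * h1 - β (x + v t + v j) j * h2
    exact (mul_ne_zero (sub_ne_zero.mpr (hMDS j t hj x)) ha) hdet

/-- Uniqueness of decoding underlying the correction of one systematic node erasure plus one
systematic element error in the `(k+2, k)` MDS general zigzag code: any array `c` with both
parities zero, supported on one column `t` together with at most two other positions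
`(x₁, j₁), (x₂, j₂)` (with `j₁ ≠ t`, `j₂ ≠ t`), must vanish. -/
theorem zigzag_erasure_plus_error_unique_decoding
    (F : Type*) [Field F] (m k : ℕ) (hm : 1 ≤ m) (hk : 0 < k)
    (v : Fin k → (Fin m → ZMod 2)) (hv : Function.Injective v)
    (β : (Fin m → ZMod 2) → Fin k → F) (hβ : ∀ x jj, β x jj ≠ 0)
    (hMDS : ∀ j t : Fin k, j ≠ t → ∀ x : Fin m → ZMod 2,
      β x t * β (x + v t + v j) t ≠ β x j * β (x + v t + v j) j)
    (c : (Fin m → ZMod 2) → Fin k → F)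
    (hpar0 : ∀ x : Fin m → ZMod 2, ∑ jj : Fin k, c x jj = 0)
    (hpar1 : ∀ x : Fin m → ZMod 2, ∑ jj : Fin k, β (x + v jj) jj * c (x + v jj) jj = 0)
    (hsupp : ∃ (t : Fin k) (p₁ p₂ : (Fin m → ZMod 2) × Fin k),
        p₁.2 ≠ t ∧ p₂.2 ≠ t ∧
        ∀ (x : Fin m → ZMod 2) (jj : Fin k),
          jj ≠ t → (x, jj) ≠ p₁ → (x, jj) ≠ p₂ → c x jj = 0) :
    c = 0 := by
  obtain ⟨t, p₁, p₂, h₁, h₂, hs⟩ := hsupp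
  have e₁ : c p₁.1 p₁.2 = 0 := entry_eq_zero hv hβ hMDS hpar0 hpar1 t p₁.1 p₁.2 h₁ p₂ hs
  have e₂ : c p₂.1 p₂.2 = 0 := entry_eq_zero hv hβ hMDS hpar0 hpar1 t p₂.1 p₂.2 h₂ p₁
    (fun x i hi hp hq => hs x i hi hq hp)
  have hoff : ∀ x j, j ≠ t → c x j = 0 := by
    intro x j hj
    by_cases hp : (x, j) = p₁
    · subst hp
      exact e₁
    by_cases hq : (x, j) = p₂
    · subst hq
      exact e₂
    exact hs x j hj hp hq
  funext x j
  rcases eq_or_ne j t with rfl | hj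
  · have h := hpar0 x
    rwa [Finset.sum_eq_single_of_mem j (Finset.mem_univ j) (fun i _ hi => hoff x i hi)] at h
  · exact hoff x j hj
end
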